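/- There exists ε₀ > 0 such that for all 0 < ε ≤ ε₀, every λ ∈ ℝ, and every nonnegative integer ν, the following equivalence holds for any solution u^r of the radial ODE φ₂₂(1−r)(u^r)''(r) + ((1/r)φ₁₁(1−r) + φ₂(1−r))(u^r)'(r) − (ν²/r²)φ₁₁(1−r)u^r(r) = λu^r(r) on (0, 1−r₀) that is bounded near r = 0: the quasi-Neumann condition lim_{r→(1−r₀)⁻} p(1−r)·(u^r)'(r) = 0 holds if and only if u(r,θ) = u^r(r)cos(νθ) extends to a C² function on the closed unit disc satisfying D_ε u = λu everywhere. In particular, a C² eigenfunction of D_ε on the closed unit disc satisfies lim_{r→1−r₀} p(1−r)·∂u/∂r(r,θ) = 0 uniformly in θ. -/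

import Mathlib

open Real Set Filter Topology MeasureTheory

noncomputable def s0 (ε t : ℝ) : ℝ :=
  if 0 ≤ t ∧ t ≤ ε then π/2 + (t/ε) * Real.sqrt (1 - (t/ε)^2) + Real.arcsin (t/ε) else π

noncomputable def s12 (ε t : ℝ) : ℝ :=
  if 0 ≤ t ∧ t ≤ ε then -(2/3) * (1 - (t/ε)^2) ^ ((3:ℝ)/2) else 0

noncomputable def s2 (ε t : ℝ) : ℝ :=
  if 0 ≤ t ∧ t ≤ ε then
    π/8 + (1/12) * ((t/ε) * Real.sqrt (1 - (t/ε)^2) * (5 - 2*(t/ε)^2) + 3 * Real.arcsin (t/ε))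
  else π/4

noncomputable def s22 (ε t : ℝ) : ℝ :=
  if 0 ≤ t ∧ t ≤ ε then
    π/8 + (1/4) * ((t/ε) * Real.sqrt (1 - (t/ε)^2) * (2*(t/ε)^2 - 1) + Real.arcsin (t/ε))
  else π/4

noncomputable def s3 (ε t : ℝ) : ℝ :=
  if 0 ≤ t ∧ t ≤ ε then -(2/15) * (1 - (t/ε)^2) ^ ((5:ℝ)/2) else 0

noncomputable def s32 (ε t : ℝ) : ℝ :=
  if 0 ≤ t ∧ t ≤ ε then -(2/15) * (2 + 3*(t/ε)^2) * (1 - (t/ε)^2) ^ ((3:ℝ)/2) else 0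

noncomputable def phi11 (ε t : ℝ) : ℝ :=
  (1/2) * (s22 ε t * s2 ε t - s3 ε t * s12 ε t) / ((s12 ε t)^2 - s22 ε t * s0 ε t)

noncomputable def phi22 (ε t : ℝ) : ℝ :=
  (1/2) * ((s22 ε t)^2 - s32 ε t * s12 ε t) / ((s12 ε t)^2 - s22 ε t * s0 ε t)

noncomputable def phi2d (ε t : ℝ) : ℝ :=
  s12 ε t / ((s12 ε t)^2 - s22 ε t * s0 ε t)

/-- The principal Sturm–Liouville coefficient on the disc, as a function of the
radius `r`; this is `p(1−r)` in the paper's notation. -/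
noncomputable def pd (ε r0 r : ℝ) : ℝ :=
  (1/8) * (1 - ε) * Real.sign (1 - r0 - r) *
    Real.exp (∫ s in (1-ε)..r, (phi11 ε (1-s) + s * phi2d ε (1-s)) / (s * phi22 ε (1-s)))

/-- `q(1−r)` as a function of `r`. -/
noncomputable def qd (ε r0 r : ℝ) : ℝ :=
  -(pd ε r0 r / r^2) * (phi11 ε (1-r) / phi22 ε (1-r))

/-- The weight `w(1−r)` as a function of `r`. -/
noncomputable def wd (ε r0 r : ℝ) : ℝ := -pd ε r0 r / phi22 ε (1-r)

/-- `u` (with derivative `u'`) solves the radial ODE with angular frequency `ν`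
on the set `s`. -/
def IsRadSol (ε lam : ℝ) (ν : ℕ) (s : Set ℝ) (u u' : ℝ → ℝ) : Prop :=
  ∀ r ∈ s, HasDerivAt u (u' r) r ∧
    ∃ d2 : ℝ, HasDerivAt u' d2 r ∧
      phi22 ε (1-r) * d2 + ((1/r) * phi11 ε (1-r) + phi2d ε (1-r)) * u' r -
        ((ν:ℝ)^2/r^2) * phi11 ε (1-r) * u r = lam * u r

/-- The point of the plane (seen as `ℂ`) with polar coordinates `(r, θ)`. -/
noncomputable def pol (r θ : ℝ) : ℂ := (r : ℂ) * Complex.exp ((θ : ℂ) * Complex.I)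

/-- Radial partial derivative of `F` at `(r, θ)`. -/
noncomputable def Fr (F : ℂ → ℝ) (r θ : ℝ) : ℝ := deriv (fun t : ℝ => F (pol t θ)) r

/-- Second radial partial derivative of `F` at `(r, θ)`. -/
noncomputable def Frr (F : ℂ → ℝ) (r θ : ℝ) : ℝ :=
  deriv (deriv (fun t : ℝ => F (pol t θ))) r

/-- Second angular partial derivative of `F` at `(r, θ)`. -/
noncomputable def Ftt (F : ℂ → ℝ) (r θ : ℝ) : ℝ :=
  deriv (deriv (fun s : ℝ => F (pol r s))) θ

/-- `F` is a `C²` function on the closed unit disc satisfying `D_ε F = λ F`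
everywhere (expressed in polar coordinates). -/
def IsDiscSol (ε lam : ℝ) (F : ℂ → ℝ) : Prop :=
  ContDiffOn ℝ 2 F (Metric.closedBall 0 1) ∧
  ∀ r ∈ Ioc (0:ℝ) 1, ∀ θ : ℝ,
    phi11 ε (1-r) * ((1/r) * Fr F r θ + (1/r^2) * Ftt F r θ) +
      phi22 ε (1-r) * Frr F r θ + phi2d ε (1-r) * Fr F r θ = lam * F (pol r θ)

/-!
In the variable `r` the operator `D_ε` acts on `u cos(νθ)` as a second-order ODE whose leading
coefficient `φ₂₂(1 - r)` changes sign at `c = 1 - r₀`. Dividing by it, `p` is an integrating factor,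
`p' / p = (φ₁₁ / r + φ₂) / φ₂₂`, and since `p' / p` has a simple pole with positive residue at `c`,
`p → 0` there. The solutions bounded near `c` form a line, generated by a solution obtained from
a Volterra equation; by the Wronskian identity, `p u' → 0` excludes all other solutions. Such a `u`
has limits of `u`, `u'`, `u''` at `c`, the last two being determined by the first through the ODE
and its derivative, so it continues as a `C²` function to the outer annulus by a multiple of the
bounded solution there.

Away from the boundary layer the coefficients are constant, and the equation is a modified
Bessel equation. For `u = r ^ ν * H (r ^ 2)` it becomes an equation for `H` with a singular endpoint
of the same kind at `0`, so `H` is `C²` up to `0`, and `u cos(νθ) = Re (z ^ ν) * H (|z| ^ 2)` is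
`C²` at the origin. Conversely, `p → 0` at `c`, while the radial derivative of a `C¹` function
is bounded near the circle `|z| = c`.
-/

section RealAnalysis

variable {f f' g g' : ℝ → ℝ} {a b c : ℝ}

theorem tendsto_atBot_of_div_sub_le_deriv (hab : a < b) (hc : 0 < c)
    (hf : ∀ x ∈ Ioo a b, HasDerivAt f (f' x) x)
    (hf' : ∀ x ∈ Ioo a b, c / (x - a) ≤ f' x) : Tendsto f (𝓝[>] a) atBot := by
  have hderiv : ∀ x ∈ Ioo a b,
      HasDerivAt (fun x => f x - c * log (x - a)) (f' x - c / (x - a)) x := fun x hx =>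
    ((hf x hx).sub ((((hasDerivAt_id x).sub_const a).log (sub_pos.2 hx.1).ne').const_mul c)
      ).congr_deriv (by simp [div_eq_mul_inv])
  have hmono : MonotoneOn (fun x => f x - c * log (x - a)) (Ioo a b) := by
    refine monotoneOn_of_hasDerivWithinAt_nonneg (convex_Ioo a b)
      (fun x hx => (hderiv x hx).continuousAt.continuousWithinAt)
      (fun x hx => (hderiv x (interior_subset hx)).hasDerivWithinAt) fun x hx => ?_
    exact sub_nonneg.2 (hf' x (interior_subset hx))
  obtain ⟨m, hm⟩ := nonempty_Ioo.2 hab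
  have hsub : Tendsto (fun x => x - a) (𝓝[>] a) (𝓝[>] 0) := by
    refine tendsto_nhdsWithin_of_tendsto_nhds_of_eventually_within _ ?_ ?_
    · exact ((continuous_sub_right a).tendsto' a 0 (sub_self a)).mono_left nhdsWithin_le_nhds
    · filter_upwards [self_mem_nhdsWithin] with x hx using sub_pos.2 (mem_Ioi.1 hx)
  refine tendsto_atBot_mono' _ ?_ (tendsto_atBot_add_const_left _ (f m - c * log (m - a))
    ((Real.tendsto_log_nhdsGT_zero.comp hsub).const_mul_atBot hc))
  filter_upwards [Ioo_mem_nhdsGT hm.1] with x hx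
  have := hmono ⟨hx.1, hx.2.trans hm.2⟩ hm hx.2.le
  simp only [Function.comp_apply] at this ⊢
  linarith

theorem exists_tendsto_nhdsGT_of_deriv_bounded {K : ℝ} (hab : a < b)
    (hf : ∀ x ∈ Ioo a b, HasDerivAt f (f' x) x) (hK : ∀ x ∈ Ioo a b, |f' x| ≤ K) :
    ∃ l, Tendsto f (𝓝[>] a) (𝓝 l) := by
  have hLip : LipschitzOnWith K.toNNReal f (Ioo a b) := by
    refine (convex_Ioo a b).lipschitzOnWith_of_nnnorm_hasDerivWithin_le
      (fun x hx => (hf x hx).hasDerivWithinAt) fun x hx => ?_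
    rw [← NNReal.coe_le_coe, coe_nnnorm, Real.norm_eq_abs]
    exact (hK x hx).trans (Real.le_coe_toNNReal K)
  obtain ⟨F, hF, hfF⟩ := hLip.extend_real
  refine ⟨F a, ((hF.continuous.tendsto a).mono_left nhdsWithin_le_nhds).congr' ?_⟩
  filter_upwards [Ioo_mem_nhdsGT hab] with x hx using (hfF hx).symm

theorem eq_of_hasDerivAt_zero_of_tendsto {l : ℝ} (hf : ∀ x ∈ Ioo a b, HasDerivAt f 0 x)
    (hl : Tendsto f (𝓝[>] a) (𝓝 l)) {x : ℝ} (hx : x ∈ Ioo a b) : f x = l := by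
  refine tendsto_nhds_unique (tendsto_const_nhds.congr' ?_) hl
  filter_upwards [Ioo_mem_nhdsGT (hx.1.trans hx.2)] with y hy
  exact isOpen_Ioo.is_const_of_deriv_eq_zero isPreconnected_Ioo
    (fun z hz => (hf z hz).differentiableAt.differentiableWithinAt)
    (fun z hz => (hf z hz).deriv) hx hy

theorem tendsto_mul_zero_of_abs_le {K : ℝ} (hab : a < b) (hf : Tendsto f (𝓝[>] a) (𝓝 0))
    (hg : ∀ x ∈ Ioo a b, |g x| ≤ K) : Tendsto (fun x => f x * g x) (𝓝[>] a) (𝓝 0) :=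
  hf.zero_mul_isBoundedUnder_le <| isBoundedUnder_of_eventually_le (a := K) <| by
    filter_upwards [Ioo_mem_nhdsGT hab] with x hx using hg x hx

theorem contDiffOn_two_of_hasDerivAt {f₁ f₂ : ℝ → ℝ} {s : Set ℝ} (hs : IsOpen s)
    (hf : ∀ x ∈ s, HasDerivAt f (f₁ x) x) (hf₁ : ∀ x ∈ s, HasDerivAt f₁ (f₂ x) x)
    (hf₂ : ContinuousOn f₂ s) : ContDiffOn ℝ 2 f s := by
  have hf₁' : ContDiffOn ℝ 1 f₁ s := by
    rw [show (1 : WithTop ℕ∞) = 0 + 1 from (zero_add 1).symm,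
      contDiffOn_succ_iff_deriv_of_isOpen hs]
    exact ⟨fun x hx => (hf₁ x hx).differentiableAt.differentiableWithinAt, by simp,
      contDiffOn_zero.2 (hf₂.congr fun x hx => (hf₁ x hx).deriv)⟩
  rw [show (2 : WithTop ℕ∞) = 1 + 1 from one_add_one_eq_two.symm,
    contDiffOn_succ_iff_deriv_of_isOpen hs]
  exact ⟨fun x hx => (hf x hx).differentiableAt.differentiableWithinAt, by simp,
    hf₁'.congr fun x hx => (hf x hx).deriv⟩

theorem eventually_hasDerivAt_deriv (hf : ContDiffAt ℝ 1 f c) :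
    ∀ᶠ x in 𝓝 c, HasDerivAt f (deriv f x) x := by
  filter_upwards [hf.eventually (by simp)] with x hx
  exact (hx.differentiableAt one_ne_zero).hasDerivAt

theorem continuousAt_deriv_of_contDiffAt_one (hf : ContDiffAt ℝ 1 f c) :
    ContinuousAt (deriv f) c := by
  have hf' : ContDiffAt ℝ 0 (fderiv ℝ f) c := hf.fderiv_right (by simp)
  simpa using hf'.continuousAt.clm_apply (continuousAt_const (y := (1 : ℝ)))

/-- The function equal to `f` on the left of `c`, to `g` on its right, and to `l` at `c`. -/
noncomputable def glueAt (c l : ℝ) (f g : ℝ → ℝ) (x : ℝ) : ℝ :=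
  if x < c then f x else if c < x then g x else l

section glueAt

variable {l : ℝ}

theorem glueAt_of_lt {x : ℝ} (hx : x < c) : glueAt c l f g x = f x := if_pos hx

theorem glueAt_of_gt {x : ℝ} (hx : c < x) : glueAt c l f g x = g x := by
  rw [glueAt, if_neg hx.not_gt, if_pos hx]

theorem glueAt_self : glueAt c l f g c = l := by
  rw [glueAt, if_neg (lt_irrefl c), if_neg (lt_irrefl c)]

theorem continuousAt_glueAt_self (hf : Tendsto f (𝓝[<] c) (𝓝 l))
    (hg : Tendsto g (𝓝[>] c) (𝓝 l)) : ContinuousAt (glueAt c l f g) c := by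
  rw [continuousAt_iff_continuous_left'_right', ContinuousWithinAt, ContinuousWithinAt,
    glueAt_self]
  refine ⟨hf.congr' ?_, hg.congr' ?_⟩
  · filter_upwards [self_mem_nhdsWithin] with x hx using (glueAt_of_lt hx).symm
  · filter_upwards [self_mem_nhdsWithin] with x hx using (glueAt_of_gt hx).symm

theorem continuousOn_glueAt (hf : ContinuousOn f (Ioo a c)) (hg : ContinuousOn g (Ioo c b))
    (hfl : Tendsto f (𝓝[<] c) (𝓝 l)) (hgl : Tendsto g (𝓝[>] c) (𝓝 l)) :
    ContinuousOn (glueAt c l f g) (Ioo a b) := by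
  refine continuousOn_of_forall_continuousAt fun x hx => ?_
  rcases lt_trichotomy x c with h | rfl | h
  · refine (hf.continuousAt (Ioo_mem_nhds hx.1 h)).congr ?_
    filter_upwards [Iio_mem_nhds h] with y hy using (glueAt_of_lt hy).symm
  · exact continuousAt_glueAt_self hfl hgl
  · refine (hg.continuousAt (Ioo_mem_nhds h hx.2)).congr ?_
    filter_upwards [Ioi_mem_nhds h] with y hy using (glueAt_of_gt hy).symm

theorem hasDerivAt_glueAt_of_ne {x : ℝ} (l' : ℝ)
    (hf : ∀ x ∈ Ioo a c, HasDerivAt f (f' x) x) (hg : ∀ x ∈ Ioo c b, HasDerivAt g (g' x) x)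
    (hx : x ∈ Ioo a b) (hxc : x ≠ c) :
    HasDerivAt (glueAt c l f g) (glueAt c l' f' g' x) x := by
  rcases hxc.lt_or_gt with h | h
  · rw [glueAt_of_lt h]
    refine (hf x ⟨hx.1, h⟩).congr_of_eventuallyEq ?_
    filter_upwards [Iio_mem_nhds h] with y hy using glueAt_of_lt hy
  · rw [glueAt_of_gt h]
    refine (hg x ⟨h, hx.2⟩).congr_of_eventuallyEq ?_
    filter_upwards [Ioi_mem_nhds h] with y hy using glueAt_of_gt hy

theorem hasDerivAt_glueAt {l' : ℝ} (hc : c ∈ Ioo a b)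
    (hf : ∀ x ∈ Ioo a c, HasDerivAt f (f' x) x) (hg : ∀ x ∈ Ioo c b, HasDerivAt g (g' x) x)
    (hfl : Tendsto f (𝓝[<] c) (𝓝 l)) (hgl : Tendsto g (𝓝[>] c) (𝓝 l))
    (hfl' : Tendsto f' (𝓝[<] c) (𝓝 l')) (hgl' : Tendsto g' (𝓝[>] c) (𝓝 l')) :
    ∀ x ∈ Ioo a b, HasDerivAt (glueAt c l f g) (glueAt c l' f' g' x) x := by
  intro x hx
  have hne : ∀ y ∈ Ioo a b, y ≠ c → HasDerivAt (glueAt c l f g) (glueAt c l' f' g' y) y :=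
    fun y => hasDerivAt_glueAt_of_ne l' hf hg
  rcases eq_or_ne x c with rfl | hxc
  · have hcont := continuousAt_glueAt_self hfl hgl
    have hleft : HasDerivWithinAt (glueAt x l f g) l' (Iic x) x := by
      refine hasDerivWithinAt_Iic_of_tendsto_deriv (s := Ioo a x) (fun y hy => ?_)
        hcont.continuousWithinAt (Ioo_mem_nhdsLT hc.1) (hfl'.congr' ?_)
      · exact (hne y ⟨hy.1, hy.2.trans hc.2⟩ hy.2.ne).differentiableAt.differentiableWithinAt
      · filter_upwards [Ioo_mem_nhdsLT hc.1] with y hy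
        rw [(hne y ⟨hy.1, hy.2.trans hc.2⟩ hy.2.ne).deriv, glueAt_of_lt hy.2]
    have hright : HasDerivWithinAt (glueAt x l f g) l' (Ici x) x := by
      refine hasDerivWithinAt_Ici_of_tendsto_deriv (s := Ioo x b) (fun y hy => ?_)
        hcont.continuousWithinAt (Ioo_mem_nhdsGT hc.2) (hgl'.congr' ?_)
      · exact (hne y ⟨hc.1.trans hy.1, hy.2⟩ hy.1.ne').differentiableAt.differentiableWithinAt
      · filter_upwards [Ioo_mem_nhdsGT hc.2] with y hy
        rw [(hne y ⟨hc.1.trans hy.1, hy.2⟩ hy.1.ne').deriv, glueAt_of_gt hy.1]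
    have hunion := hleft.union hright
    rw [Iic_union_Ici] at hunion
    rw [glueAt_self]
    exact hunion.hasDerivAt univ_mem
  · exact hne x hx hxc

end glueAt

end RealAnalysis

/-- `P` is a positive integrating factor on `s` for `w' + q w`, that is,
`(P w)' = P (w' + q w)` there. -/
structure IsIntegratingFactorOn (P q : ℝ → ℝ) (s : Set ℝ) : Prop where
  pos : ∀ x ∈ s, 0 < P x
  hasDerivAt : ∀ x ∈ s, HasDerivAt P (P x * q x) x

theorem isIntegratingFactorOn_exp_integral {q : ℝ → ℝ} {a b c : ℝ}
    (hq : ContinuousOn q (Ioo a b)) (hc : c ∈ Ioo a b) :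
    IsIntegratingFactorOn (fun x => exp (∫ t in c..x, q t)) q (Ioo a b) where
  pos _ _ := exp_pos _
  hasDerivAt x hx :=
    (intervalIntegral.integral_hasDerivAt_right
      ((hq.mono (ordConnected_Ioo.uIcc_subset hc hx)).intervalIntegrable)
      (hq.stronglyMeasurableAtFilter isOpen_Ioo x hx)
      (hq.continuousAt (isOpen_Ioo.mem_nhds hx))).exp

/-- The average of `f` over `(a, s)` with respect to the measure `P q dt`, which has total mass
`P s` when `P` is an integrating factor for `q` vanishing at `a`. It is the solution of
`w' + q w = q f` that is bounded at `a`. -/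
noncomputable def weightedAverage (P q : ℝ → ℝ) (a : ℝ) (f : ℝ → ℝ) (s : ℝ) : ℝ :=
  (∫ t in a..s, P t * q t * f t) / P s

namespace IsIntegratingFactorOn

variable {P q : ℝ → ℝ} {s : Set ℝ} {a b : ℝ}

theorem mono {t : Set ℝ} (hP : IsIntegratingFactorOn P q s) (hts : t ⊆ s) :
    IsIntegratingFactorOn P q t where
  pos x hx := hP.pos x (hts hx)
  hasDerivAt x hx := hP.hasDerivAt x (hts hx)

theorem continuousOn (hP : IsIntegratingFactorOn P q s) : ContinuousOn P s := fun x hx =>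
  (hP.hasDerivAt x hx).continuousAt.continuousWithinAt

theorem const_mul {k : ℝ} (hP : IsIntegratingFactorOn P q s) (hk : 0 < k) :
    IsIntegratingFactorOn (fun x => k * P x) q s where
  pos x hx := mul_pos hk (hP.pos x hx)
  hasDerivAt x hx := ((hP.hasDerivAt x hx).const_mul k).congr_deriv (by ring)

theorem congr {P' q' : ℝ → ℝ} (hP : IsIntegratingFactorOn P q s) (hs : IsOpen s)
    (hPP' : EqOn P' P s) (hqq' : EqOn q' q s) : IsIntegratingFactorOn P' q' s where
  pos x hx := (hPP' hx).symm ▸ hP.pos x hx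
  hasDerivAt x hx := by
    rw [hPP' hx, hqq' hx]
    exact (hP.hasDerivAt x hx).congr_of_eventuallyEq (hPP'.eventuallyEq_of_mem (hs.mem_nhds hx))

theorem comp_neg (hP : IsIntegratingFactorOn P q (Ioo a b)) :
    IsIntegratingFactorOn (fun x => P (-x)) (fun x => -q (-x)) (Ioo (-b) (-a)) where
  pos x hx := hP.pos (-x) ⟨lt_neg.1 hx.2, neg_lt.1 hx.1⟩
  hasDerivAt x hx :=
    ((hP.hasDerivAt (-x) ⟨lt_neg.1 hx.2, neg_lt.1 hx.1⟩).comp x (hasDerivAt_neg x)).congr_deriv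
      (by ring)

theorem mul_of_hasDerivAt {A A' B : ℝ → ℝ}
    (hP : IsIntegratingFactorOn P (fun x => B x / A x) s) (hA : ∀ x ∈ s, 0 < A x)
    (hA' : ∀ x ∈ s, HasDerivAt A (A' x) x) :
    IsIntegratingFactorOn (fun x => P x * A x) (fun x => (A' x + B x) / A x) s where
  pos x hx := mul_pos (hP.pos x hx) (hA x hx)
  hasDerivAt x hx := by
    refine ((hP.hasDerivAt x hx).mul (hA' x hx)).congr_deriv ?_
    have := (hA x hx).ne'
    field_simp
    ring

theorem tendsto_zero {c : ℝ} (hP : IsIntegratingFactorOn P q (Ioo a b)) (hab : a < b)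
    (hc : 0 < c) (hq : ∀ x ∈ Ioo a b, c / (x - a) ≤ q x) : Tendsto P (𝓝[>] a) (𝓝 0) := by
  have hlog : ∀ x ∈ Ioo a b, HasDerivAt (fun x => log (P x)) (q x) x := fun x hx =>
    ((hP.hasDerivAt x hx).log (hP.pos x hx).ne').congr_deriv
      (mul_div_cancel_left₀ _ (hP.pos x hx).ne')
  refine (tendsto_exp_atBot.comp
    (tendsto_atBot_of_div_sub_le_deriv hab hc hlog hq)).congr' ?_
  filter_upwards [Ioo_mem_nhdsGT hab] with x hx using exp_log (hP.pos x hx)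

section weightedAverage

variable {f g : ℝ → ℝ} {s : ℝ}

theorem intervalIntegrable_mul (hP : IsIntegratingFactorOn P q (Ioo a b))
    (hP0 : Tendsto P (𝓝[>] a) (𝓝 0)) (hq : ∀ x ∈ Ioo a b, 0 ≤ q x) (hs : s ∈ Ioo a b) :
    IntervalIntegrable (fun t => P t * q t) volume a s := by
  have hsub : Ioc a s ⊆ Ioo a b := fun x hx => ⟨hx.1, hx.2.trans_lt hs.2⟩
  have hupdate : ∀ x ∈ Ioc a s, Function.update P a 0 =ᶠ[𝓝 x] P := fun x hx => by
    filter_upwards [Ioi_mem_nhds hx.1] with y hy using Function.update_of_ne hy.ne' _ _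
  rw [intervalIntegrable_iff_integrableOn_Ioc_of_le hs.1.le]
  refine intervalIntegral.integrableOn_deriv_of_nonneg (g := Function.update P a 0) ?_
    (fun x hx => (hP.hasDerivAt x (hsub ⟨hx.1, hx.2.le⟩)).congr_of_eventuallyEq
      (hupdate x ⟨hx.1, hx.2.le⟩))
    fun x hx => mul_nonneg (hP.pos x (hsub ⟨hx.1, hx.2.le⟩)).le (hq x (hsub ⟨hx.1, hx.2.le⟩))
  intro x hx
  rcases hx.1.eq_or_lt with rfl | h
  · rw [continuousWithinAt_update_same, Icc_sdiff_left]
    exact hP0.mono_left (nhdsWithin_mono _ Ioc_subset_Ioi_self)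
  · exact ((hP.hasDerivAt x (hsub ⟨h, hx.2⟩)).continuousAt.congr
      (hupdate x ⟨h, hx.2⟩).symm).continuousWithinAt

theorem integral_mul (hP : IsIntegratingFactorOn P q (Ioo a b))
    (hP0 : Tendsto P (𝓝[>] a) (𝓝 0)) (hq : ∀ x ∈ Ioo a b, 0 ≤ q x) (hs : s ∈ Ioo a b) :
    ∫ t in a..s, P t * q t = P s := by
  rw [intervalIntegral.integral_eq_sub_of_hasDerivAt_of_tendsto hs.1
    (fun x hx => hP.hasDerivAt x ⟨hx.1, hx.2.trans hs.2⟩)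
    (hP.intervalIntegrable_mul hP0 hq hs) hP0
    ((hP.hasDerivAt s hs).continuousAt.tendsto.mono_left nhdsWithin_le_nhds), sub_zero]

theorem intervalIntegrable_mul_mul (hP : IsIntegratingFactorOn P q (Ioo a b))
    (hP0 : Tendsto P (𝓝[>] a) (𝓝 0)) (hq : ∀ x ∈ Ioo a b, 0 ≤ q x)
    (hf : ContinuousOn f (Icc a b)) (hs : s ∈ Ioo a b) :
    IntervalIntegrable (fun t => P t * q t * f t) volume a s :=
  (hP.intervalIntegrable_mul hP0 hq hs).mul_continuousOn
    (hf.mono (uIcc_of_le hs.1.le ▸ Icc_subset_Icc_right hs.2.le))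

theorem hasDerivAt_weightedAverage (hP : IsIntegratingFactorOn P q (Ioo a b))
    (hP0 : Tendsto P (𝓝[>] a) (𝓝 0)) (hq : ∀ x ∈ Ioo a b, 0 ≤ q x)
    (hqc : ContinuousOn q (Ioo a b)) (hf : ContinuousOn f (Icc a b)) (hs : s ∈ Ioo a b) :
    HasDerivAt (weightedAverage P q a f) (q s * (f s - weightedAverage P q a f s)) s := by
  have hcont : ContinuousOn (fun t => P t * q t * f t) (Ioo a b) :=
    (hP.continuousOn.mul hqc).mul (hf.mono Ioo_subset_Icc_self)
  have hint : HasDerivAt (fun u => ∫ t in a..u, P t * q t * f t) (P s * q s * f s) s :=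
    intervalIntegral.integral_hasDerivAt_right (hP.intervalIntegrable_mul_mul hP0 hq hf hs)
      (hcont.stronglyMeasurableAtFilter isOpen_Ioo s hs)
      (hcont.continuousAt (isOpen_Ioo.mem_nhds hs))
  refine (hint.div (hP.hasDerivAt s hs) (hP.pos s hs).ne').congr_deriv ?_
  have := (hP.pos s hs).ne'
  rw [weightedAverage]
  field_simp

theorem abs_weightedAverage_le {m : ℝ} (hP : IsIntegratingFactorOn P q (Ioo a b))
    (hP0 : Tendsto P (𝓝[>] a) (𝓝 0)) (hq : ∀ x ∈ Ioo a b, 0 ≤ q x) (hs : s ∈ Ioo a b)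
    (hf : ∀ t ∈ Ioc a s, |f t| ≤ m) : |weightedAverage P q a f s| ≤ m := by
  rw [weightedAverage, abs_div, abs_of_pos (hP.pos s hs), div_le_iff₀ (hP.pos s hs)]
  calc |∫ t in a..s, P t * q t * f t| ≤ ∫ t in a..s, m * (P t * q t) := by
        rw [← Real.norm_eq_abs]
        refine intervalIntegral.norm_integral_le_of_norm_le hs.1.le
          (Eventually.of_forall fun t ht => ?_) ((hP.intervalIntegrable_mul hP0 hq hs).const_mul m)
        have ht' : t ∈ Ioo a b := ⟨ht.1, ht.2.trans_lt hs.2⟩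
        have hnonneg := mul_nonneg (hP.pos t ht').le (hq t ht')
        rw [norm_mul, norm_of_nonneg hnonneg, mul_comm]
        exact mul_le_mul_of_nonneg_right (hf t ht) hnonneg
    _ = m * P s := by rw [intervalIntegral.integral_const_mul, hP.integral_mul hP0 hq hs]

theorem weightedAverage_sub (hP : IsIntegratingFactorOn P q (Ioo a b))
    (hP0 : Tendsto P (𝓝[>] a) (𝓝 0)) (hq : ∀ x ∈ Ioo a b, 0 ≤ q x)
    (hf : ContinuousOn f (Icc a b)) (hg : ContinuousOn g (Icc a b)) (hs : s ∈ Ioo a b) :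
    weightedAverage P q a f s - weightedAverage P q a g s =
      weightedAverage P q a (fun t => f t - g t) s := by
  simp only [weightedAverage, mul_sub]
  rw [intervalIntegral.integral_sub (hP.intervalIntegrable_mul_mul hP0 hq hf hs)
    (hP.intervalIntegrable_mul_mul hP0 hq hg hs), sub_div]

end weightedAverage

end IsIntegratingFactorOn

section Picard

open scoped Nat

variable {a b K : ℝ}

/-- `Φ` has the Lipschitz property of a Volterra integral operator with constant `K`: it turns a
bound of order `(x - a) ^ n` on `f - g` into the integrated bound on `Φ f - Φ g`. This is what
makes a high iterate of `Φ` a contraction. -/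
def IsVolterraMap (K : ℝ) (Φ : C(Icc a b, ℝ) → C(Icc a b, ℝ)) : Prop :=
  ∀ (f g : C(Icc a b, ℝ)) (n : ℕ) (m : ℝ), 0 ≤ m →
    (∀ x : Icc a b, |f x - g x| ≤ m * (x - a) ^ n) →
    ∀ x : Icc a b, |Φ f x - Φ g x| ≤ K * m / (n + 1) * (x - a) ^ (n + 1)

theorem IsVolterraMap.abs_iterate_sub_le {Φ : C(Icc a b, ℝ) → C(Icc a b, ℝ)} (hK : 0 ≤ K)
    (hΦ : IsVolterraMap K Φ) (f g : C(Icc a b, ℝ)) (n : ℕ) (x : Icc a b) :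
    |Φ^[n] f x - Φ^[n] g x| ≤ K ^ n / n ! * dist f g * (x - a) ^ n := by
  induction n generalizing x with
  | zero => simpa [Real.dist_eq] using ContinuousMap.dist_apply_le_dist (f := f) (g := g) x
  | succ n ih =>
    rw [Function.iterate_succ_apply', Function.iterate_succ_apply']
    refine (hΦ _ _ n _ (by positivity) ih x).trans_eq ?_
    rw [Nat.factorial_succ, Nat.cast_mul, Nat.cast_succ]
    field_simp
    ring

theorem IsVolterraMap.exists_isFixedPt {Φ : C(Icc a b, ℝ) → C(Icc a b, ℝ)} (hK : 0 ≤ K)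
    (hΦ : IsVolterraMap K Φ) : ∃ f, Function.IsFixedPt Φ f := by
  obtain ⟨n, hn⟩ := ((FloorSemiring.tendsto_pow_div_factorial_atTop
    (K * |b - a|)).eventually_lt_const one_pos).exists
  have hcontr : ContractingWith (Real.toNNReal ((K * |b - a|) ^ n / n !)) Φ^[n] := by
    refine ⟨Real.toNNReal_lt_one.2 hn, LipschitzWith.of_dist_le' fun f g => ?_⟩
    refine (ContinuousMap.dist_le (by positivity)).2 fun x => ?_
    have hx : (x : ℝ) - a ≤ |b - a| := (sub_le_sub_right x.2.2 a).trans (le_abs_self _)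
    have hx0 : 0 ≤ (x : ℝ) - a := sub_nonneg.2 x.2.1
    calc dist (Φ^[n] f x) (Φ^[n] g x) ≤ K ^ n / n ! * dist f g * (x - a) ^ n :=
          hΦ.abs_iterate_sub_le hK f g n x
      _ ≤ K ^ n / n ! * dist f g * |b - a| ^ n := by gcongr
      _ = (K * |b - a|) ^ n / n ! * dist f g := by ring
  exact ⟨_, hcontr.isFixedPt_fixedPoint_iterate⟩

theorem abs_integral_sub_integral_le {F G : ℝ → ℝ} {k x : ℝ} {n : ℕ} (hax : a ≤ x)
    (hF : IntervalIntegrable F volume a x) (hG : IntervalIntegrable G volume a x)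
    (hFG : ∀ t ∈ Ioo a x, |F t - G t| ≤ k * (t - a) ^ n) :
    |(∫ t in a..x, F t) - ∫ t in a..x, G t| ≤ k / (n + 1) * (x - a) ^ (n + 1) := by
  rw [← intervalIntegral.integral_sub hF hG, ← Real.norm_eq_abs]
  calc ‖∫ t in a..x, (F t - G t)‖ ≤ ∫ t in a..x, k * (t - a) ^ n := by
        refine intervalIntegral.norm_integral_le_of_norm_le hax ?_
          (Continuous.intervalIntegrable (by fun_prop) _ _)
        filter_upwards [volume.ae_ne x] with t htx ht using hFG t ⟨ht.1, ht.2.lt_of_ne htx⟩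
    _ = k / (n + 1) * (x - a) ^ (n + 1) := by
        rw [intervalIntegral.integral_const_mul,
          intervalIntegral.integral_comp_sub_right (fun t => t ^ n), integral_pow]
        simp only [sub_self, zero_pow n.succ_ne_zero]
        ring

theorem exists_eq_const_add_integral (hab : a ≤ b) (hK : 0 ≤ K) (y₀ : ℝ) {J : (ℝ → ℝ) → ℝ → ℝ}
    (hJi : ∀ f, ContinuousOn f (Icc a b) → IntervalIntegrable (J f) volume a b)
    (hJ : ∀ f g, ContinuousOn f (Icc a b) → ContinuousOn g (Icc a b) → ∀ x ∈ Ioo a b, ∀ m,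
      (∀ t ∈ Icc a x, |f t - g t| ≤ m) → |J f x - J g x| ≤ K * m) :
    ∃ v, ContinuousOn v (Icc a b) ∧ ∀ x ∈ Icc a b, v x = y₀ + ∫ t in a..x, J v t := by
  have hE : ∀ f : C(Icc a b, ℝ), ContinuousOn (IccExtend hab f) (Icc a b) := fun f =>
    (continuous_IccExtend_iff.2 f.continuous).continuousOn
  have hint : ∀ (f : C(Icc a b, ℝ)) (x : Icc a b),
      IntervalIntegrable (J (IccExtend hab f)) volume a x := fun f x =>
    (hJi _ (hE f)).mono_set (by
      rw [uIcc_of_le hab, uIcc_of_le x.2.1]; exact Icc_subset_Icc_right x.2.2)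
  let Φ : C(Icc a b, ℝ) → C(Icc a b, ℝ) := fun f =>
    ⟨fun x => y₀ + ∫ t in a..x, J (IccExtend hab f) t, continuous_const.add
      (continuousOn_iff_continuous_domRestrict.1 <| uIcc_of_le hab ▸
        intervalIntegral.continuousOn_primitive_interval' (hJi _ (hE f)) left_mem_uIcc)⟩
  have hΦ : IsVolterraMap K Φ := by
    intro f g n m hm hfg x
    have hbound : ∀ t ∈ Ioo a (x : ℝ),
        |J (IccExtend hab f) t - J (IccExtend hab g) t| ≤ K * m * (t - a) ^ n := by
      intro t ht
      have htb : t < b := ht.2.trans_le x.2.2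
      rw [mul_assoc]
      refine hJ _ _ (hE f) (hE g) t ⟨ht.1, htb⟩ _ fun y hy => ?_
      rw [IccExtend_of_mem _ _ ⟨hy.1, hy.2.trans htb.le⟩,
        IccExtend_of_mem _ _ ⟨hy.1, hy.2.trans htb.le⟩]
      have hya := sub_nonneg.2 hy.1
      have hyt := sub_le_sub_right hy.2 a
      exact (hfg _).trans (by gcongr)
    refine (congrArg abs (add_sub_add_left_eq_sub _ _ _)).trans_le ?_
    exact abs_integral_sub_integral_le x.2.1 (hint f x) (hint g x) hbound
  obtain ⟨f, hf⟩ := hΦ.exists_isFixedPt hK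
  refine ⟨IccExtend hab f, hE f, fun x hx => ?_⟩
  rw [IccExtend_of_mem _ _ hx]
  exact (DFunLike.congr_fun hf ⟨x, hx⟩).symm

end Picard

theorem intervalIntegrable_of_continuousOn_of_abs_le {f : ℝ → ℝ} {a b M : ℝ} (hab : a ≤ b)
    (hf : ContinuousOn f (Ioo a b)) (hM : ∀ x ∈ Ioo a b, |f x| ≤ M) :
    IntervalIntegrable f volume a b := by
  rw [intervalIntegrable_iff_integrableOn_Ioo_of_le hab]
  exact IntegrableOn.of_bound measure_Ioo_lt_top (hf.aestronglyMeasurable measurableSet_Ioo) M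
    ((ae_restrict_iff' measurableSet_Ioo).2 (Eventually.of_forall hM))

/-- `u`, with first and second derivatives `u₁` and `u₂`, solves `A u'' + B u' + C u = 0` on `s`. -/
structure SolvesODEOn (A B C u u₁ u₂ : ℝ → ℝ) (s : Set ℝ) : Prop where
  hasDerivAt : ∀ x ∈ s, HasDerivAt u (u₁ x) x
  hasDerivAt_deriv : ∀ x ∈ s, HasDerivAt u₁ (u₂ x) x
  eq_zero : ∀ x ∈ s, A x * u₂ x + B x * u₁ x + C x * u x = 0

namespace SolvesODEOn

variable {A B C u u₁ u₂ : ℝ → ℝ} {s : Set ℝ}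

theorem mono {t : Set ℝ} (hu : SolvesODEOn A B C u u₁ u₂ s) (hts : t ⊆ s) :
    SolvesODEOn A B C u u₁ u₂ t where
  hasDerivAt x hx := hu.hasDerivAt x (hts hx)
  hasDerivAt_deriv x hx := hu.hasDerivAt_deriv x (hts hx)
  eq_zero x hx := hu.eq_zero x (hts hx)

theorem const_mul (k : ℝ) (hu : SolvesODEOn A B C u u₁ u₂ s) :
    SolvesODEOn A B C (fun x => k * u x) (fun x => k * u₁ x) (fun x => k * u₂ x) s where
  hasDerivAt x hx := (hu.hasDerivAt x hx).const_mul k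
  hasDerivAt_deriv x hx := (hu.hasDerivAt_deriv x hx).const_mul k
  eq_zero x hx := by linear_combination k * hu.eq_zero x hx

theorem comp_neg {a b : ℝ} (hu : SolvesODEOn A B C u u₁ u₂ (Ioo a b)) :
    SolvesODEOn (fun x => -A (-x)) (fun x => B (-x)) (fun x => -C (-x))
      (fun x => u (-x)) (fun x => -u₁ (-x)) (fun x => u₂ (-x)) (Ioo (-b) (-a)) where
  hasDerivAt x hx :=
    ((hu.hasDerivAt (-x) ⟨lt_neg.1 hx.2, neg_lt.1 hx.1⟩).comp x (hasDerivAt_neg x)).congr_deriv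
      (mul_neg_one _)
  hasDerivAt_deriv x hx :=
    ((hu.hasDerivAt_deriv (-x) ⟨lt_neg.1 hx.2, neg_lt.1 hx.1⟩).comp x
      (hasDerivAt_neg x)).neg.congr_deriv (by ring)
  eq_zero x hx := by
    linear_combination -hu.eq_zero (-x) ⟨lt_neg.1 hx.2, neg_lt.1 hx.1⟩

theorem continuousOn (hu : SolvesODEOn A B C u u₁ u₂ s) : ContinuousOn u s := fun x hx =>
  (hu.hasDerivAt x hx).continuousAt.continuousWithinAt

theorem continuousOn_deriv (hu : SolvesODEOn A B C u u₁ u₂ s) : ContinuousOn u₁ s := fun x hx =>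
  (hu.hasDerivAt_deriv x hx).continuousAt.continuousWithinAt

theorem deriv₂_eq (hu : SolvesODEOn A B C u u₁ u₂ s) {x : ℝ} (hx : x ∈ s) (hA : A x ≠ 0) :
    u₂ x = -(B x * u₁ x + C x * u x) / A x := by
  rw [eq_div_iff hA]
  linear_combination hu.eq_zero x hx

theorem continuousOn_deriv₂ (hu : SolvesODEOn A B C u u₁ u₂ s) (hA : ContinuousOn A s)
    (hB : ContinuousOn B s) (hC : ContinuousOn C s) (hA0 : ∀ x ∈ s, A x ≠ 0) :
    ContinuousOn u₂ s :=
  ((((hB.mul hu.continuousOn_deriv).add (hC.mul hu.continuousOn)).neg.div hA hA0)).congr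
    fun _ hx => hu.deriv₂_eq hx (hA0 _ hx)

end SolvesODEOn

/-- The left endpoint `a` of `(a, b)` is a singular point of `A u'' + B u' + C u = 0`,
with `A` vanishing at `a` and `A`, `B` positive to its right. -/
structure IsSingularEndpoint (A B C : ℝ → ℝ) (a b : ℝ) : Prop where
  lt : a < b
  contDiffAt_A : ContDiffAt ℝ 1 A a
  contDiffAt_B : ContDiffAt ℝ 1 B a
  contDiffAt_C : ContDiffAt ℝ 1 C a
  continuousOn_A : ContinuousOn A (Icc a b)
  continuousOn_B : ContinuousOn B (Icc a b)
  continuousOn_C : ContinuousOn C (Icc a b)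
  A_eq_zero : A a = 0
  A_pos : ∀ x ∈ Ioo a b, 0 < A x
  B_pos : ∀ x ∈ Icc a b, 0 < B x

namespace IsSingularEndpoint

variable {A B C : ℝ → ℝ} {a b : ℝ}

theorem deriv_nonneg (h : IsSingularEndpoint A B C a b) : 0 ≤ deriv A a := by
  have hslope := (hasDerivWithinAt_iff_tendsto_slope' self_notMem_Ioi).1
    (h.contDiffAt_A.differentiableAt one_ne_zero).hasDerivAt.hasDerivWithinAt
  refine ge_of_tendsto hslope ?_
  filter_upwards [Ioo_mem_nhdsGT h.lt] with x hx
  rw [slope_def_field, h.A_eq_zero, sub_zero]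
  exact div_nonneg (h.A_pos x hx).le (sub_pos.2 hx.1).le

theorem continuousOn_div (h : IsSingularEndpoint A B C a b) :
    ContinuousOn (fun x => B x / A x) (Ioo a b) :=
  (h.continuousOn_B.mono Ioo_subset_Icc_self).div (h.continuousOn_A.mono Ioo_subset_Icc_self)
    fun x hx => (h.A_pos x hx).ne'

theorem div_nonneg (h : IsSingularEndpoint A B C a b) : ∀ x ∈ Ioo a b, 0 ≤ B x / A x :=
  fun x hx => (div_pos (h.B_pos x (Ioo_subset_Icc_self hx)) (h.A_pos x hx)).le

theorem exists_integratingFactor (h : IsSingularEndpoint A B C a b) :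
    ∃ P, IsIntegratingFactorOn P (fun x => B x / A x) (Ioo a b) := by
  obtain ⟨c, hc⟩ := nonempty_Ioo.2 h.lt
  exact ⟨_, isIntegratingFactorOn_exp_integral h.continuousOn_div hc⟩

theorem exists_div_sub_le_div (h : IsSingularEndpoint A B C a b) :
    ∃ k > 0, ∃ d ∈ Ioc a b, ∀ x ∈ Ioo a d, k / (x - a) ≤ B x / A x := by
  obtain ⟨M, hM, hAM⟩ :=
    (h.contDiffAt_A.differentiableAt one_ne_zero).hasDerivAt.isBigO_sub.exists_pos
  have hBa : 0 < B a := h.B_pos a (left_mem_Icc.2 h.lt.le)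
  have hBlim : ∀ᶠ x in 𝓝 a, B a / 2 < B x :=
    h.contDiffAt_B.continuousAt.eventually (lt_mem_nhds (half_lt_self hBa))
  obtain ⟨d, hd, hdsub⟩ := (mem_nhdsGT_iff_exists_mem_Ioc_Ioo_subset h.lt).1
    (nhdsWithin_le_nhds (s := Ioi a) (hAM.bound.and hBlim))
  refine ⟨B a / 2 / M, by positivity, d, hd, fun x hx => ?_⟩
  obtain ⟨hAx, hBx⟩ := hdsub hx
  have hxa : 0 < x - a := sub_pos.2 hx.1
  have hAx0 := h.A_pos x ⟨hx.1, hx.2.trans_le hd.2⟩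
  rw [h.A_eq_zero, sub_zero, Real.norm_of_nonneg hAx0.le, Real.norm_of_nonneg hxa.le] at hAx
  rw [div_div]
  exact div_le_div₀ ((half_pos hBa).trans hBx).le hBx.le hAx0 hAx

theorem tendsto_integratingFactor (h : IsSingularEndpoint A B C a b) {P : ℝ → ℝ}
    (hP : IsIntegratingFactorOn P (fun x => B x / A x) (Ioo a b)) :
    Tendsto P (𝓝[>] a) (𝓝 0) := by
  obtain ⟨k, hk, d, hd, hle⟩ := h.exists_div_sub_le_div
  exact (hP.mono (Ioo_subset_Ioo_right hd.2)).tendsto_zero hd.1 hk hle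

/-- The solution `w` of `A w' + B w = -C f` that is bounded at `a`, in terms of an integrating
factor `P` for `B / A`. -/
noncomputable def boundedSolution (A B C P : ℝ → ℝ) (a : ℝ) (f : ℝ → ℝ) (x : ℝ) : ℝ :=
  -weightedAverage P (fun x => B x / A x) a (fun t => C t / B t * f t) x

section boundedSolution

variable {P f : ℝ → ℝ}

theorem continuousOn_div_mul (h : IsSingularEndpoint A B C a b) (hf : ContinuousOn f (Icc a b)) :
    ContinuousOn (fun t => C t / B t * f t) (Icc a b) :=
  (h.continuousOn_C.div h.continuousOn_B fun x hx => (h.B_pos x hx).ne').mul hf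

theorem hasDerivAt_boundedSolution (h : IsSingularEndpoint A B C a b)
    (hP : IsIntegratingFactorOn P (fun x => B x / A x) (Ioo a b)) (hf : ContinuousOn f (Icc a b))
    {x : ℝ} (hx : x ∈ Ioo a b) :
    HasDerivAt (boundedSolution A B C P a f)
      (-(B x * boundedSolution A B C P a f x + C x * f x) / A x) x := by
  refine (hP.hasDerivAt_weightedAverage (h.tendsto_integratingFactor hP) h.div_nonneg
    h.continuousOn_div (h.continuousOn_div_mul hf) hx).neg.congr_deriv ?_
  have hA := (h.A_pos x hx).ne'
  have hB := (h.B_pos x (Ioo_subset_Icc_self hx)).ne'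
  rw [boundedSolution]
  field_simp
  ring

theorem exists_abs_boundedSolution_sub_le (h : IsSingularEndpoint A B C a b)
    (hP : IsIntegratingFactorOn P (fun x => B x / A x) (Ioo a b)) :
    ∃ K, 0 ≤ K ∧ ∀ f g, ContinuousOn f (Icc a b) → ContinuousOn g (Icc a b) →
      ∀ x ∈ Ioo a b, ∀ m, (∀ t ∈ Icc a x, |f t - g t| ≤ m) →
        |boundedSolution A B C P a f x - boundedSolution A B C P a g x| ≤ K * m := by
  have hP0 := h.tendsto_integratingFactor hP
  obtain ⟨K, hK⟩ := isCompact_Icc.exists_bound_of_continuousOn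
    (h.continuousOn_C.div h.continuousOn_B fun x hx => (h.B_pos x hx).ne')
  have hK0 : 0 ≤ K := (norm_nonneg _).trans (hK a (left_mem_Icc.2 h.lt.le))
  refine ⟨K, hK0, fun f g hf hg x hx m hfg => ?_⟩
  rw [boundedSolution, boundedSolution, neg_sub_neg, abs_sub_comm,
    hP.weightedAverage_sub hP0 h.div_nonneg (h.continuousOn_div_mul hf)
      (h.continuousOn_div_mul hg) hx]
  refine hP.abs_weightedAverage_le hP0 h.div_nonneg hx fun t ht => ?_
  rw [← mul_sub, abs_mul]
  exact mul_le_mul (hK t ⟨ht.1.le, ht.2.trans hx.2.le⟩) (hfg t ⟨ht.1.le, ht.2⟩)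
    (abs_nonneg _) hK0

theorem exists_abs_boundedSolution_le (h : IsSingularEndpoint A B C a b)
    (hP : IsIntegratingFactorOn P (fun x => B x / A x) (Ioo a b))
    (hf : ContinuousOn f (Icc a b)) :
    ∃ M, ∀ x ∈ Ioo a b, |boundedSolution A B C P a f x| ≤ M := by
  obtain ⟨K, -, hK⟩ := h.exists_abs_boundedSolution_sub_le hP
  obtain ⟨M, hM⟩ := isCompact_Icc.exists_bound_of_continuousOn hf
  refine ⟨K * M, fun x hx => ?_⟩
  simpa [boundedSolution, weightedAverage] using hK f 0 hf continuousOn_const x hx M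
    fun t ht => by simpa using hM t ⟨ht.1, ht.2.trans hx.2.le⟩

end boundedSolution

/-- The regular (Frobenius) solution is the fixed point of the Volterra map
`v ↦ 1 + ∫ boundedSolution v`. -/
theorem exists_regular_solution (h : IsSingularEndpoint A B C a b) :
    ∃ v v₁ v₂ K, SolvesODEOn A B C v v₁ v₂ (Ioo a b) ∧ Tendsto v (𝓝[>] a) (𝓝 1) ∧
      ∀ x ∈ Ioo a b, |v₁ x| ≤ K := by
  obtain ⟨P, hP⟩ := h.exists_integratingFactor
  obtain ⟨K, hK0, hK⟩ := h.exists_abs_boundedSolution_sub_le hP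
  have hderiv := fun f (hf : ContinuousOn f (Icc a b)) x (hx : x ∈ Ioo a b) =>
    h.hasDerivAt_boundedSolution hP hf hx
  have hcont : ∀ f, ContinuousOn f (Icc a b) →
      ContinuousOn (boundedSolution A B C P a f) (Ioo a b) := fun f hf x hx =>
    (hderiv f hf x hx).continuousAt.continuousWithinAt
  have hint : ∀ f, ContinuousOn f (Icc a b) →
      IntervalIntegrable (boundedSolution A B C P a f) volume a b := fun f hf =>
    have ⟨_, hM⟩ := h.exists_abs_boundedSolution_le hP hf
    intervalIntegrable_of_continuousOn_of_abs_le h.lt.le (hcont f hf) hM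
  obtain ⟨v, hv, hveq⟩ := exists_eq_const_add_integral h.lt.le hK0 1 hint hK
  obtain ⟨M, hM⟩ := h.exists_abs_boundedSolution_le hP hv
  refine ⟨v, _, _, M, ⟨fun x hx => ?_, hderiv v hv, fun x hx => ?_⟩, ?_, hM⟩
  · refine HasDerivAt.congr_of_eventuallyEq ?_
      (eventually_of_mem (Icc_mem_nhds hx.1 hx.2) hveq)
    exact (intervalIntegral.integral_hasDerivAt_right
      ((hint v hv).mono_set (uIcc_subset_uIcc_left (Icc_subset_uIcc (Ioo_subset_Icc_self hx))))
      ((hcont v hv).stronglyMeasurableAtFilter isOpen_Ioo x hx)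
      ((hcont v hv).continuousAt (isOpen_Ioo.mem_nhds hx))).const_add 1
  · have := (h.A_pos x hx).ne'
    field_simp
    ring
  · have hva : v a = 1 := by simpa using hveq a (left_mem_Icc.2 h.lt.le)
    exact hva ▸ (hv a (left_mem_Icc.2 h.lt.le)).mono_left
      (nhdsWithin_le_of_mem (mem_of_superset (Ioo_mem_nhdsGT h.lt) Ioo_subset_Icc_self))

end IsSingularEndpoint

namespace IsIntegratingFactorOn

variable {P q u u₁ : ℝ → ℝ} {a b : ℝ}

theorem monotoneOn (hP : IsIntegratingFactorOn P q (Ioo a b)) (hq : ∀ x ∈ Ioo a b, 0 ≤ q x) :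
    MonotoneOn P (Ioo a b) := by
  refine monotoneOn_of_hasDerivWithinAt_nonneg (convex_Ioo a b) hP.continuousOn
    (f' := fun x => P x * q x) ?_ ?_ <;> rw [interior_Ioo] <;> intro x hx
  · exact (hP.hasDerivAt x hx).hasDerivWithinAt
  · exact mul_nonneg (hP.pos x hx).le (hq x hx)

/-- L'Hôpital's rule for `P w / P`. -/
theorem tendsto_of_linear_ode {α β g w w' : ℝ → ℝ} {β₀ g₀ : ℝ} (hab : a < b)
    (hP : IsIntegratingFactorOn P (fun x => β x / α x) (Ioo a b))
    (hP0 : Tendsto P (𝓝[>] a) (𝓝 0)) (hα : ∀ x ∈ Ioo a b, α x ≠ 0)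
    (hβ : Tendsto β (𝓝[>] a) (𝓝 β₀)) (hβ₀ : β₀ ≠ 0) (hg : Tendsto g (𝓝[>] a) (𝓝 g₀))
    (hw : ∀ x ∈ Ioo a b, HasDerivAt w (w' x) x)
    (hode : ∀ x ∈ Ioo a b, α x * w' x + β x * w x = g x)
    (hPw : Tendsto (fun x => P x * w x) (𝓝[>] a) (𝓝 0)) :
    Tendsto w (𝓝[>] a) (𝓝 (g₀ / β₀)) := by
  have hI := Ioo_mem_nhdsGT hab
  have hPw' : ∀ x ∈ Ioo a b, HasDerivAt (fun x => P x * w x) (P x * (g x / α x)) x := by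
    intro x hx
    refine ((hP.hasDerivAt x hx).mul (hw x hx)).congr_deriv ?_
    have := hα x hx
    rw [← hode x hx]
    field_simp
    ring
  have hlim := HasDerivAt.lhopital_zero_nhdsGT (a := a) (l := 𝓝 (g₀ / β₀))
    (f := fun x => P x * w x) (f' := fun x => P x * (g x / α x)) (g := P)
    (g' := fun x => P x * (β x / α x)) (eventually_of_mem hI hPw')
    (eventually_of_mem hI hP.hasDerivAt) ?_ hPw hP0 ?_
  · refine hlim.congr' ?_
    filter_upwards [hI] with x hx using mul_div_cancel_left₀ _ (hP.pos x hx).ne'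
  · filter_upwards [hI, hβ.eventually_ne hβ₀] with x hx hβx
    exact mul_ne_zero (hP.pos x hx).ne' (div_ne_zero hβx (hα x hx))
  · refine (hg.div hβ hβ₀).congr' ?_
    filter_upwards [hI] with x hx
    rw [mul_div_mul_left _ _ (hP.pos x hx).ne', div_div_div_cancel_right₀ (hα x hx), Pi.div_apply]

/-- Since `P` increases, `P x * |u x| ≤ P x * |u t| + K * (t - x)` for `x < t`; let `x → a`, then
`t → a`. -/
theorem tendsto_mul_zero_of_abs_mul_deriv_le {K : ℝ} (hab : a < b)
    (hP : IsIntegratingFactorOn P q (Ioo a b)) (hP0 : Tendsto P (𝓝[>] a) (𝓝 0))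
    (hq : ∀ x ∈ Ioo a b, 0 ≤ q x) (hu : ∀ x ∈ Ioo a b, HasDerivAt u (u₁ x) x)
    (hK : ∀ x ∈ Ioo a b, |P x * u₁ x| ≤ K) :
    Tendsto (fun x => P x * u x) (𝓝[>] a) (𝓝 0) := by
  have hle : ∀ t ∈ Ioo a b, ∀ x ∈ Ioo a t, |P x * u x| ≤ P x * |u t| + K * (t - x) := by
    intro t ht x hx
    have hsub : Icc x t ⊆ Ioo a b := Icc_subset_Ioo hx.1 ht.2
    have hxb := hsub (left_mem_Icc.2 hx.2.le)
    have hPx := hP.pos x hxb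
    have hbound : ∀ y ∈ Icc x t, ‖u₁ y‖ ≤ K / P x := by
      intro y hy
      have hPy := hK y (hsub hy)
      rw [abs_mul, abs_of_pos (hP.pos y (hsub hy))] at hPy
      rw [le_div_iff₀' hPx]
      exact (mul_le_mul_of_nonneg_right (hP.monotoneOn hq hxb (hsub hy) hy.1)
        (abs_nonneg _)).trans hPy
    have hmv := (convex_Icc x t).norm_image_sub_le_of_norm_hasDerivWithin_le
      (fun y hy => (hu y (hsub hy)).hasDerivWithinAt) hbound
      (right_mem_Icc.2 hx.2.le) (left_mem_Icc.2 hx.2.le)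
    rw [Real.norm_eq_abs, Real.norm_eq_abs, abs_sub_comm x t, abs_of_pos (sub_pos.2 hx.2),
      div_mul_eq_mul_div, le_div_iff₀' hPx] at hmv
    rw [abs_mul, abs_of_pos hPx]
    linarith [mul_le_mul_of_nonneg_left (abs_sub_abs_le_abs_sub (u x) (u t)) hPx.le]
  obtain ⟨c, hc⟩ := nonempty_Ioo.2 hab
  have hK0 : 0 ≤ K := (abs_nonneg _).trans (hK c hc)
  refine Metric.tendsto_nhds.2 fun ε hε => ?_
  have hsmall : Tendsto (fun t => K * (t - a)) (𝓝[>] a) (𝓝 0) :=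
    (Continuous.tendsto' (by fun_prop) a 0 (by simp)).mono_left nhdsWithin_le_nhds
  obtain ⟨t, ht, htb⟩ := ((hsmall.eventually (gt_mem_nhds (half_pos hε))).and
    (Ioo_mem_nhdsGT hab)).exists
  have hPt : Tendsto (fun x => P x * |u t|) (𝓝[>] a) (𝓝 0) := by simpa using hP0.mul_const |u t|
  filter_upwards [Ioo_mem_nhdsGT htb.1, hPt.eventually (gt_mem_nhds (half_pos hε))] with x hx hPx
  rw [Real.dist_eq, sub_zero]
  linarith [hle t htb x hx, mul_le_mul_of_nonneg_left (sub_le_sub_left hx.1.le t) hK0]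

theorem hasDerivAt_wronskian {A B C v v₁ u₂ v₂ : ℝ → ℝ} {s : Set ℝ}
    (hP : IsIntegratingFactorOn P (fun x => B x / A x) s) (hA : ∀ x ∈ s, A x ≠ 0)
    (hu : SolvesODEOn A B C u u₁ u₂ s) (hv : SolvesODEOn A B C v v₁ v₂ s) {x : ℝ} (hx : x ∈ s) :
    HasDerivAt (fun x => P x * (u₁ x * v x - u x * v₁ x)) 0 x := by
  refine ((hP.hasDerivAt x hx).mul (((hu.hasDerivAt_deriv x hx).mul (hv.hasDerivAt x hx)).sub
    ((hu.hasDerivAt x hx).mul (hv.hasDerivAt_deriv x hx)))).congr_deriv ?_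
  simp only [Pi.mul_apply, Pi.sub_apply]
  have := hA x hx
  field_simp
  linear_combination P x * v x * hu.eq_zero x hx - P x * u x * hv.eq_zero x hx

end IsIntegratingFactorOn

theorem SolvesODEOn.hasDerivAt_deriv₂ {A B C A' B' C' u u₁ u₂ : ℝ → ℝ} {s : Set ℝ}
    (hu : SolvesODEOn A B C u u₁ u₂ s) (hs : IsOpen s) (hA0 : ∀ x ∈ s, A x ≠ 0) {x : ℝ}
    (hx : x ∈ s) (hA : HasDerivAt A (A' x) x) (hB : HasDerivAt B (B' x) x)
    (hC : HasDerivAt C (C' x) x) :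
    HasDerivAt u₂ ((-((B' x + C x) * u₁ x + C' x * u x) - (A' x + B x) * u₂ x) / A x) x := by
  refine (((((hB.mul (hu.hasDerivAt_deriv x hx)).add (hC.mul (hu.hasDerivAt x hx))).neg.div hA
    (hA0 x hx))).congr_of_eventuallyEq (eventually_of_mem (hs.mem_nhds hx)
      fun y hy => hu.deriv₂_eq hy (hA0 y hy))).congr_deriv ?_
  simp only [Pi.add_apply, Pi.mul_apply, Pi.neg_apply]
  have := hA0 x hx
  field_simp
  linear_combination A' x * hu.eq_zero x hx

/-- The value at a singular endpoint `a` of the first derivative of a solution with value `u₀`. -/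
noncomputable def endpointDeriv (B C : ℝ → ℝ) (a u₀ : ℝ) : ℝ :=
  -(C a * u₀) / B a

/-- The value at a singular endpoint `a` of the second derivative of a solution with value `u₀`,
read off the differentiated equation. -/
noncomputable def endpointDeriv₂ (A B C : ℝ → ℝ) (a u₀ : ℝ) : ℝ :=
  -((deriv B a + C a) * endpointDeriv B C a u₀ + deriv C a * u₀) / (deriv A a + B a)

theorem endpointDeriv_comp_neg (B C : ℝ → ℝ) (a u₀ : ℝ) :
    endpointDeriv (fun x => B (-x)) (fun x => -C (-x)) (-a) u₀ = -endpointDeriv B C a u₀ := by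
  simp only [endpointDeriv, neg_neg]
  ring

theorem endpointDeriv₂_comp_neg (A B C : ℝ → ℝ) (a u₀ : ℝ) :
    endpointDeriv₂ (fun x => -A (-x)) (fun x => B (-x)) (fun x => -C (-x)) (-a) u₀ =
      endpointDeriv₂ A B C a u₀ := by
  simp only [endpointDeriv₂, endpointDeriv_comp_neg, deriv.fun_neg, deriv_comp_neg, neg_neg]
  ring

namespace IsSingularEndpoint

variable {A B C P u u₁ u₂ : ℝ → ℝ} {a b u₀ : ℝ}

theorem tendsto_deriv (h : IsSingularEndpoint A B C a b)
    (hP : IsIntegratingFactorOn P (fun x => B x / A x) (Ioo a b))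
    (hu : SolvesODEOn A B C u u₁ u₂ (Ioo a b)) (hu₀ : Tendsto u (𝓝[>] a) (𝓝 u₀))
    (hflux : Tendsto (fun x => P x * u₁ x) (𝓝[>] a) (𝓝 0)) :
    Tendsto u₁ (𝓝[>] a) (𝓝 (endpointDeriv B C a u₀)) :=
  hP.tendsto_of_linear_ode h.lt (h.tendsto_integratingFactor hP) (fun x hx => (h.A_pos x hx).ne')
    (h.contDiffAt_B.continuousAt.tendsto.mono_left nhdsWithin_le_nhds)
    (h.B_pos a (left_mem_Icc.2 h.lt.le)).ne'
    ((h.contDiffAt_C.continuousAt.tendsto.mono_left nhdsWithin_le_nhds).mul hu₀).neg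
    hu.hasDerivAt_deriv (fun x hx => by linear_combination hu.eq_zero x hx) hflux

/-- The differentiated equation `A u₂' + (A' + B) u₂ = -((B' + C) u₁ + C' u)` is again linear and
singular at `a`, with integrating factor `P A`. -/
theorem tendsto_deriv₂ (h : IsSingularEndpoint A B C a b)
    (hP : IsIntegratingFactorOn P (fun x => B x / A x) (Ioo a b))
    (hu : SolvesODEOn A B C u u₁ u₂ (Ioo a b)) (hu₀ : Tendsto u (𝓝[>] a) (𝓝 u₀))
    (hflux : Tendsto (fun x => P x * u₁ x) (𝓝[>] a) (𝓝 0)) :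
    Tendsto u₂ (𝓝[>] a) (𝓝 (endpointDeriv₂ A B C a u₀)) := by
  have hP0 := h.tendsto_integratingFactor hP
  have hu₁ := h.tendsto_deriv hP hu hu₀ hflux
  have hlim : ∀ {f : ℝ → ℝ}, ContinuousAt f a → Tendsto f (𝓝[>] a) (𝓝 (f a)) :=
    fun hf => hf.tendsto.mono_left nhdsWithin_le_nhds
  have hA := hlim h.contDiffAt_A.continuousAt
  have hB := hlim h.contDiffAt_B.continuousAt
  have hC := hlim h.contDiffAt_C.continuousAt
  obtain ⟨d, hd, hder⟩ := (mem_nhdsGT_iff_exists_mem_Ioc_Ioo_subset h.lt).1 <|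
    nhdsWithin_le_nhds (s := Ioi a) <| (eventually_hasDerivAt_deriv h.contDiffAt_A).and <|
      (eventually_hasDerivAt_deriv h.contDiffAt_B).and (eventually_hasDerivAt_deriv h.contDiffAt_C)
  have hsub : Ioo a d ⊆ Ioo a b := Ioo_subset_Ioo_right hd.2
  have hApos : ∀ x ∈ Ioo a d, 0 < A x := fun x hx => h.A_pos x (hsub hx)
  refine ((hP.mono hsub).mul_of_hasDerivAt hApos fun x hx => (hder hx).1).tendsto_of_linear_ode
    hd.1 (by simpa [h.A_eq_zero] using hP0.mul hA) (fun x hx => (hApos x hx).ne')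
    ((hlim (continuousAt_deriv_of_contDiffAt_one h.contDiffAt_A)).add hB)
    (add_pos_of_nonneg_of_pos h.deriv_nonneg (h.B_pos a (left_mem_Icc.2 h.lt.le))).ne'
    ((((hlim (continuousAt_deriv_of_contDiffAt_one h.contDiffAt_B)).add hC).mul hu₁).add
      ((hlim (continuousAt_deriv_of_contDiffAt_one h.contDiffAt_C)).mul hu₀)).neg
    (fun x hx => (hu.mono hsub).hasDerivAt_deriv₂ isOpen_Ioo (fun y hy => (hApos y hy).ne') hx
      (hder hx).1 (hder hx).2.1 (hder hx).2.2)
    (fun x hx => ?_) ?_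
  · have := (hApos x hx).ne'
    field_simp
    ring
  · have hPA : Tendsto (fun x => P x * -(B x * u₁ x + C x * u x)) (𝓝[>] a) (𝓝 0) := by
      simpa using hP0.mul ((hB.mul hu₁).add (hC.mul hu₀)).neg
    refine hPA.congr' ?_
    filter_upwards [Ioo_mem_nhdsGT h.lt] with x hx
    linear_combination -P x * hu.eq_zero x hx

/-- A solution with vanishing flux is proportional to the regular solution, as their Wronskian
vanishes. -/
theorem exists_tendsto_of_tendsto_flux (h : IsSingularEndpoint A B C a b)
    (hP : IsIntegratingFactorOn P (fun x => B x / A x) (Ioo a b))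
    (hu : SolvesODEOn A B C u u₁ u₂ (Ioo a b))
    (hflux : Tendsto (fun x => P x * u₁ x) (𝓝[>] a) (𝓝 0)) :
    ∃ u₀, Tendsto u (𝓝[>] a) (𝓝 u₀) := by
  have hP0 := h.tendsto_integratingFactor hP
  obtain ⟨v, v₁, v₂, K, hv, hv0, hK⟩ := h.exists_regular_solution
  have hPu : Tendsto (fun x => P x * u x) (𝓝[>] a) (𝓝 0) := by
    obtain ⟨d, hd, hbdd⟩ := (mem_nhdsGT_iff_exists_mem_Ioc_Ioo_subset h.lt).1
      (hflux.abs.eventually_le_const (abs_zero.trans_lt one_pos))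
    have hsub : Ioo a d ⊆ Ioo a b := Ioo_subset_Ioo_right hd.2
    exact (hP.mono hsub).tendsto_mul_zero_of_abs_mul_deriv_le hd.1 hP0
      (fun x hx => h.div_nonneg x (hsub hx)) (fun x hx => hu.hasDerivAt x (hsub hx))
      fun x hx => hbdd hx
  have hW : ∀ x ∈ Ioo a b, u₁ x * v x - u x * v₁ x = 0 := by
    have hlim : Tendsto (fun x => P x * (u₁ x * v x - u x * v₁ x)) (𝓝[>] a) (𝓝 0) := by
      have := (hflux.mul hv0).sub (tendsto_mul_zero_of_abs_le h.lt hPu hK)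
      rw [zero_mul, sub_zero] at this
      exact this.congr fun x => by ring
    intro x hx
    have := eq_of_hasDerivAt_zero_of_tendsto
      (fun y hy => hP.hasDerivAt_wronskian (fun z hz => (h.A_pos z hz).ne') hu hv hy) hlim hx
    exact (mul_eq_zero.1 this).resolve_left (hP.pos x hx).ne'
  obtain ⟨d, hd, hv'⟩ := (mem_nhdsGT_iff_exists_mem_Ioc_Ioo_subset h.lt).1
    (hv0.eventually_ne one_ne_zero)
  have hsub : Ioo a d ⊆ Ioo a b := Ioo_subset_Ioo_right hd.2
  obtain ⟨l, hl⟩ := exists_tendsto_nhdsGT_of_deriv_bounded (f := fun x => u x / v x) (f' := 0)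
    (K := 0) hd.1 (fun x hx => ((hu.hasDerivAt x (hsub hx)).div (hv.hasDerivAt x (hsub hx))
      (hv' hx)).congr_deriv (by rw [hW x (hsub hx), zero_div, Pi.zero_apply])) (by simp)
  refine ⟨l * 1, (hl.mul hv0).congr' ?_⟩
  filter_upwards [Ioo_mem_nhdsGT hd.1] with x hx using div_mul_cancel₀ _ (hv' hx)

end IsSingularEndpoint

theorem SolvesODEOn.glueAt {A B C f f₁ f₂ g g₁ g₂ : ℝ → ℝ} {a b c l l₁ l₂ : ℝ} (hc : c ∈ Ioo a b)
    (hf : SolvesODEOn A B C f f₁ f₂ (Ioo a c)) (hg : SolvesODEOn A B C g g₁ g₂ (Ioo c b))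
    (hfl : Tendsto f (𝓝[<] c) (𝓝 l)) (hgl : Tendsto g (𝓝[>] c) (𝓝 l))
    (hfl₁ : Tendsto f₁ (𝓝[<] c) (𝓝 l₁)) (hgl₁ : Tendsto g₁ (𝓝[>] c) (𝓝 l₁))
    (hfl₂ : Tendsto f₂ (𝓝[<] c) (𝓝 l₂)) (hgl₂ : Tendsto g₂ (𝓝[>] c) (𝓝 l₂))
    (heq : A c * l₂ + B c * l₁ + C c * l = 0) :
    SolvesODEOn A B C (glueAt c l f g) (glueAt c l₁ f₁ g₁) (glueAt c l₂ f₂ g₂) (Ioo a b) where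
  hasDerivAt := hasDerivAt_glueAt hc hf.hasDerivAt hg.hasDerivAt hfl hgl hfl₁ hgl₁
  hasDerivAt_deriv :=
    hasDerivAt_glueAt hc hf.hasDerivAt_deriv hg.hasDerivAt_deriv hfl₁ hgl₁ hfl₂ hgl₂
  eq_zero x hx := by
    rcases lt_trichotomy x c with h | rfl | h
    · simpa only [glueAt_of_lt h] using hf.eq_zero x ⟨hx.1, h⟩
    · simpa only [glueAt_self] using heq
    · simpa only [glueAt_of_gt h] using hg.eq_zero x ⟨h, hx.2⟩

theorem IsSingularEndpoint.exists_solution_tendsto {A B C : ℝ → ℝ} {a b : ℝ}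
    (h : IsSingularEndpoint A B C a b) (u₀ : ℝ) :
    ∃ v v₁ v₂, SolvesODEOn A B C v v₁ v₂ (Ioo a b) ∧ Tendsto v (𝓝[>] a) (𝓝 u₀) ∧
      Tendsto v₁ (𝓝[>] a) (𝓝 (endpointDeriv B C a u₀)) ∧
      Tendsto v₂ (𝓝[>] a) (𝓝 (endpointDeriv₂ A B C a u₀)) := by
  obtain ⟨P, hP⟩ := h.exists_integratingFactor
  obtain ⟨v, v₁, v₂, K, hv, hv0, hK⟩ := h.exists_regular_solution
  have hv' := hv.const_mul u₀
  have hlim : Tendsto (fun x => u₀ * v x) (𝓝[>] a) (𝓝 u₀) := by simpa using hv0.const_mul u₀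
  have hflux : Tendsto (fun x => P x * (u₀ * v₁ x)) (𝓝[>] a) (𝓝 0) :=
    tendsto_mul_zero_of_abs_le (K := |u₀| * K) h.lt (h.tendsto_integratingFactor hP)
      fun x hx => (abs_mul _ _).trans_le (mul_le_mul_of_nonneg_left (hK x hx) (abs_nonneg _))
  exact ⟨_, _, _, hv', hlim, h.tendsto_deriv hP hv' hlim hflux, h.tendsto_deriv₂ hP hv' hlim hflux⟩

/-- The leading coefficient of `A u'' + B u' + C u = 0` on `(a, b)` changes sign from negative to
positive at `c`, where `B` is positive. -/
structure SignChange (A B C : ℝ → ℝ) (a c b : ℝ) : Prop where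
  mem : c ∈ Ioo a b
  contDiffAt_A : ContDiffAt ℝ 1 A c
  contDiffAt_B : ContDiffAt ℝ 1 B c
  contDiffAt_C : ContDiffAt ℝ 1 C c
  continuousOn_A : ContinuousOn A (Ioc a b)
  continuousOn_B : ContinuousOn B (Ioc a b)
  continuousOn_C : ContinuousOn C (Ioc a b)
  A_eq_zero : A c = 0
  A_neg : ∀ x ∈ Ioo a c, A x < 0
  A_pos : ∀ x ∈ Ioc c b, 0 < A x
  B_pos : ∀ x ∈ Icc c b, 0 < B x

namespace SignChange

variable {A B C P u u₁ u₂ : ℝ → ℝ} {a b c : ℝ}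

theorem right (h : SignChange A B C a c b) : IsSingularEndpoint A B C c b where
  lt := h.mem.2
  contDiffAt_A := h.contDiffAt_A
  contDiffAt_B := h.contDiffAt_B
  contDiffAt_C := h.contDiffAt_C
  continuousOn_A := h.continuousOn_A.mono (Icc_subset_Ioc h.mem.1 le_rfl)
  continuousOn_B := h.continuousOn_B.mono (Icc_subset_Ioc h.mem.1 le_rfl)
  continuousOn_C := h.continuousOn_C.mono (Icc_subset_Ioc h.mem.1 le_rfl)
  A_eq_zero := h.A_eq_zero
  A_pos x hx := h.A_pos x (Ioo_subset_Ioc_self hx)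
  B_pos := h.B_pos

theorem exists_left (h : SignChange A B C a c b) :
    ∃ d ∈ Ioo a c, IsSingularEndpoint (fun x => -A (-x)) (fun x => B (-x)) (fun x => -C (-x))
      (-c) (-d) := by
  have hBc : ∀ᶠ x in 𝓝 c, 0 < B x :=
    h.contDiffAt_B.continuousAt.eventually (lt_mem_nhds (h.B_pos c (left_mem_Icc.2 h.mem.2.le)))
  obtain ⟨d, hd, hdB⟩ := (mem_nhdsLE_iff_exists_mem_Ico_Ioc_subset h.mem.1).1
    (nhdsWithin_le_nhds (s := Iic c) hBc)
  obtain ⟨e, hde, hec⟩ := exists_between hd.2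
  have hmaps : MapsTo Neg.neg (Icc (-c) (-e)) (Ioc a b) := fun x hx =>
    ⟨hd.1.trans_lt (hde.trans_le (le_neg.1 hx.2)), (neg_le.1 hx.1).trans h.mem.2.le⟩
  have hcontDiff : ∀ {f : ℝ → ℝ}, ContDiffAt ℝ 1 f c → ContDiffAt ℝ 1 (fun x => f (-x)) (-c) :=
    fun hf => ContDiffAt.comp (-c) ((neg_neg c).symm ▸ hf) contDiff_neg.contDiffAt
  have hcont : ∀ {f : ℝ → ℝ}, ContinuousOn f (Ioc a b) →
      ContinuousOn (fun x => f (-x)) (Icc (-c) (-e)) :=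
    fun hf => hf.comp continuousOn_neg hmaps
  exact ⟨e, ⟨hd.1.trans_lt hde, hec⟩,
    { lt := neg_lt_neg hec
      contDiffAt_A := (hcontDiff h.contDiffAt_A).neg
      contDiffAt_B := hcontDiff h.contDiffAt_B
      contDiffAt_C := (hcontDiff h.contDiffAt_C).neg
      continuousOn_A := (hcont h.continuousOn_A).neg
      continuousOn_B := hcont h.continuousOn_B
      continuousOn_C := (hcont h.continuousOn_C).neg
      A_eq_zero := by rw [neg_neg, h.A_eq_zero, neg_zero]
      A_pos := fun x hx => neg_pos.2 <|
        h.A_neg (-x) ⟨(hmaps (Ioo_subset_Icc_self hx)).1, neg_lt.1 hx.1⟩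
      B_pos := fun x hx => hdB ⟨hde.trans_le (le_neg.1 hx.2), neg_le.1 hx.1⟩ }⟩

theorem tendsto_integratingFactor_left (h : SignChange A B C a c b)
    (hP : IsIntegratingFactorOn P (fun x => B x / A x) (Ioo a c)) :
    Tendsto P (𝓝[<] c) (𝓝 0) := by
  obtain ⟨d, hd, hleft⟩ := h.exists_left
  have hP' := hleft.tendsto_integratingFactor
    ((hP.mono (Ioo_subset_Ioo_left hd.1.le)).comp_neg.congr isOpen_Ioo (fun _ _ => rfl)
      fun _ _ => div_neg _)
  simpa only [Function.comp_def, neg_neg] using hP'.comp tendsto_neg_nhdsLT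

theorem exists_tendsto_left (h : SignChange A B C a c b)
    (hP : IsIntegratingFactorOn P (fun x => B x / A x) (Ioo a c))
    (hu : SolvesODEOn A B C u u₁ u₂ (Ioo a c))
    (hflux : Tendsto (fun x => P x * u₁ x) (𝓝[<] c) (𝓝 0)) :
    ∃ u₀, Tendsto u (𝓝[<] c) (𝓝 u₀) ∧ Tendsto u₁ (𝓝[<] c) (𝓝 (endpointDeriv B C c u₀)) ∧
      Tendsto u₂ (𝓝[<] c) (𝓝 (endpointDeriv₂ A B C c u₀)) := by
  obtain ⟨d, hd, hleft⟩ := h.exists_left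
  have hsub : Ioo d c ⊆ Ioo a c := Ioo_subset_Ioo_left hd.1.le
  have hP' : IsIntegratingFactorOn (fun x => P (-x)) (fun x => B (-x) / -A (-x))
      (Ioo (-c) (-d)) := (hP.mono hsub).comp_neg.congr isOpen_Ioo (fun _ _ => rfl) fun _ _ =>
    div_neg _
  have hu' := (hu.mono hsub).comp_neg
  have hflux' : Tendsto (fun x => P (-x) * -u₁ (-x)) (𝓝[>] (-c)) (𝓝 0) := by
    simpa only [Function.comp_def, mul_neg, neg_zero] using
      (hflux.comp tendsto_neg_nhdsGT_neg).neg
  have hreflect : ∀ {f : ℝ → ℝ} {l : ℝ}, Tendsto (fun x => f (-x)) (𝓝[>] (-c)) (𝓝 l) →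
      Tendsto f (𝓝[<] c) (𝓝 l) := fun hf => by
    simpa only [Function.comp_def, neg_neg] using hf.comp tendsto_neg_nhdsLT
  obtain ⟨u₀, hu₀⟩ := hleft.exists_tendsto_of_tendsto_flux hP' hu' hflux'
  have hu₁ := hleft.tendsto_deriv hP' hu' hu₀ hflux'
  have hu₂ := hleft.tendsto_deriv₂ hP' hu' hu₀ hflux'
  rw [endpointDeriv_comp_neg] at hu₁
  rw [endpointDeriv₂_comp_neg] at hu₂
  exact ⟨u₀, hreflect hu₀, hreflect (by simpa only [neg_neg] using hu₁.neg), hreflect hu₂⟩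

/-- Across `c` the solution is continued by the multiple of the regular solution with the same
value there. -/
theorem exists_extension (h : SignChange A B C a c b)
    (hP : IsIntegratingFactorOn P (fun x => B x / A x) (Ioo a c))
    (hu : SolvesODEOn A B C u u₁ u₂ (Ioo a c))
    (hflux : Tendsto (fun x => P x * u₁ x) (𝓝[<] c) (𝓝 0)) :
    ∃ U U₁ U₂, SolvesODEOn A B C U U₁ U₂ (Ioo a b) ∧ ContinuousOn U₂ (Ioo a b) ∧
      EqOn U u (Ioo a c) := by
  obtain ⟨u₀, hu₀, hu₁, hu₂⟩ := h.exists_tendsto_left hP hu hflux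
  obtain ⟨v, v₁, v₂, hv, hv₀, hv₁, hv₂⟩ := h.right.exists_solution_tendsto u₀
  have hBc : B c ≠ 0 := (h.B_pos c (left_mem_Icc.2 h.mem.2.le)).ne'
  refine ⟨_, _, _, hu.glueAt h.mem hv hu₀ hv₀ hu₁ hv₁ hu₂ hv₂ ?_,
    continuousOn_glueAt ?_ ?_ hu₂ hv₂, fun x hx => glueAt_of_lt hx.2⟩
  · rw [h.A_eq_zero, endpointDeriv]
    field_simp
    ring
  · have hsub : Ioo a c ⊆ Ioc a b := fun x hx => ⟨hx.1, (hx.2.trans h.mem.2).le⟩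
    exact hu.continuousOn_deriv₂ (h.continuousOn_A.mono hsub) (h.continuousOn_B.mono hsub)
      (h.continuousOn_C.mono hsub) fun x hx => (h.A_neg x hx).ne
  · have hsub : Ioo c b ⊆ Ioc a b := fun x hx => ⟨h.mem.1.trans hx.1, hx.2.le⟩
    exact hv.continuousOn_deriv₂ (h.continuousOn_A.mono hsub) (h.continuousOn_B.mono hsub)
      (h.continuousOn_C.mono hsub) fun x hx => (h.A_pos x (Ioo_subset_Ioc_self hx)).ne'

end SignChange

section BesselOrigin

variable {u u₁ u₂ : ℝ → ℝ} {ν : ℕ} {μ ρ K : ℝ}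

theorem le_zero_of_tendsto_pow_mul_deriv {m : ℝ} (hρ : 0 < ρ)
    (hu : ∀ r ∈ Ioo 0 ρ, HasDerivAt u (u₁ r) r) (hK : ∀ r ∈ Ioo 0 ρ, |u r| ≤ K)
    (hm : Tendsto (fun r => r ^ (ν + 1) * u₁ r) (𝓝[>] 0) (𝓝 m)) : m ≤ 0 := by
  by_contra! hpos
  obtain ⟨d, hd, hdsub⟩ := (mem_nhdsGT_iff_exists_mem_Ioc_Ioo_subset (lt_min hρ one_pos)).1
    (hm.eventually (lt_mem_nhds (half_lt_self hpos)))
  have hlog : ∀ r ∈ Ioo 0 d, m / 2 / (r - 0) ≤ u₁ r := by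
    intro r hr
    have hr1 : r ≤ 1 := hr.2.le.trans (hd.2.trans (min_le_right _ _))
    have hflux : m / 2 < r ^ (ν + 1) * u₁ r := hdsub hr
    have hu₁ : 0 < u₁ r :=
      (mul_pos_iff_of_pos_left (pow_pos hr.1 _)).1 ((half_pos hpos).trans hflux)
    have hpow : r ^ (ν + 1) ≤ r := pow_le_of_le_one hr.1.le hr1 ν.succ_ne_zero
    rw [sub_zero, div_le_iff₀' hr.1]
    exact hflux.le.trans (mul_le_mul_of_nonneg_right hpow hu₁.le)
  have hbot : Tendsto u (𝓝[>] 0) atBot := tendsto_atBot_of_div_sub_le_deriv hd.1 (half_pos hpos)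
    (fun r hr => hu r ⟨hr.1, hr.2.trans_le (hd.2.trans (min_le_left _ _))⟩) hlog
  obtain ⟨r, hlt, hr⟩ :=
    ((hbot.eventually (eventually_lt_atBot (-K))).and (Ioo_mem_nhdsGT hρ)).exists
  exact hlt.not_ge (neg_le_of_abs_le (hK r hr))

theorem eq_zero_of_tendsto_pow_mul_deriv {m : ℝ} (hρ : 0 < ρ)
    (hu : ∀ r ∈ Ioo 0 ρ, HasDerivAt u (u₁ r) r) (hK : ∀ r ∈ Ioo 0 ρ, |u r| ≤ K)
    (hm : Tendsto (fun r => r ^ (ν + 1) * u₁ r) (𝓝[>] 0) (𝓝 m)) : m = 0 := by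
  refine (le_zero_of_tendsto_pow_mul_deriv hρ hu hK hm).antisymm (neg_nonpos.1 ?_)
  refine le_zero_of_tendsto_pow_mul_deriv (u := fun r => -u r) (u₁ := fun r => -u₁ r) (ν := ν)
    (K := K) hρ (fun r hr => (hu r hr).neg) (fun r hr => (abs_neg _).trans_le (hK r hr)) ?_
  simpa only [mul_neg] using hm.neg

/-- `r ^ (2ν + 1) (u / r ^ ν)'`, the flux of `u / r ^ ν`. -/
def besselFlux (ν : ℕ) (u u₁ : ℝ → ℝ) (r : ℝ) : ℝ :=
  r ^ ν * (r * u₁ r - ν * u r)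

/-- `u`, with first and second derivatives `u₁` and `u₂`, solves the modified Bessel equation
`r² u'' + r u' - (ν² + μ r²) u = 0` on `s`. -/
abbrev SolvesBesselOn (ν : ℕ) (μ : ℝ) (u u₁ u₂ : ℝ → ℝ) (s : Set ℝ) : Prop :=
  SolvesODEOn (fun r => r ^ 2) (fun r => r) (fun r => -(ν ^ 2 + μ * r ^ 2)) u u₁ u₂ s

theorem hasDerivAt_pow_of_ne_zero (n : ℕ) {r : ℝ} (hr : r ≠ 0) :
    HasDerivAt (fun r : ℝ => r ^ n) (n * r ^ n / r) r := by
  refine (hasDerivAt_pow n r).congr_deriv ?_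
  rcases n with _ | n
  · simp
  · rw [Nat.add_sub_cancel, pow_succ]
    field_simp

theorem SolvesODEOn.hasDerivAt_besselFlux {s : Set ℝ} (hu : SolvesBesselOn ν μ u u₁ u₂ s) {r : ℝ}
    (hr : r ∈ s) (hr0 : r ≠ 0) :
    HasDerivAt (besselFlux ν u u₁) (μ * r ^ (ν + 1) * u r) r := by
  refine ((hasDerivAt_pow_of_ne_zero ν hr0).mul (((hasDerivAt_id r).mul
    (hu.hasDerivAt_deriv r hr)).sub ((hu.hasDerivAt r hr).const_mul (ν : ℝ)))).congr_deriv ?_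
  simp only [id, Pi.mul_apply, Pi.sub_apply]
  have heq := hu.eq_zero r hr
  field_simp
  linear_combination r ^ ν * heq

theorem SolvesODEOn.tendsto_besselFlux (hu : SolvesBesselOn ν μ u u₁ u₂ (Ioo 0 ρ)) (hρ : 0 < ρ)
    (hK : ∀ r ∈ Ioo 0 ρ, |u r| ≤ K) : Tendsto (besselFlux ν u u₁) (𝓝[>] 0) (𝓝 0) := by
  have hbound : ∀ r ∈ Ioo 0 ρ, |μ * r ^ (ν + 1) * u r| ≤ |μ| * ρ ^ (ν + 1) * K := by
    intro r hr
    have hr0 := hr.1.le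
    have hrρ := hr.2.le
    rw [abs_mul, abs_mul, abs_of_nonneg (pow_nonneg hr0 _)]
    have := hK r hr
    gcongr
  obtain ⟨m, hm⟩ := exists_tendsto_nhdsGT_of_deriv_bounded hρ
    (fun r hr => hu.hasDerivAt_besselFlux hr hr.1.ne') hbound
  have hνu : Tendsto (fun r => ν * r ^ ν * u r) (𝓝[>] 0) (𝓝 0) := by
    refine tendsto_mul_zero_of_abs_le hρ (Tendsto.mono_left ?_ nhdsWithin_le_nhds) hK
    refine Continuous.tendsto' (by fun_prop) 0 0 ?_
    rcases eq_or_ne ν 0 with rfl | hν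
    · simp
    · simp [hν]
  have hflux : Tendsto (fun r => r ^ (ν + 1) * u₁ r) (𝓝[>] 0) (𝓝 (m + 0)) :=
    (hm.add hνu).congr fun r => by rw [besselFlux]; ring
  rw [add_zero] at hflux
  rwa [eq_zero_of_tendsto_pow_mul_deriv hρ hu.hasDerivAt hK hflux] at hm

theorem SolvesODEOn.comp_sqrt (hu : SolvesBesselOn ν μ u u₁ u₂ (Ioo 0 ρ)) (hρ : 0 < ρ) :
    ∃ g₂, SolvesODEOn (fun x => x) (fun _ => ν + 1) (fun _ => -(μ / 4)) (fun x => u √x / √x ^ ν)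
      (fun x => besselFlux ν u u₁ √x / (2 * x ^ (ν + 1))) g₂ (Ioo 0 (ρ ^ 2)) := by
  have hmem : ∀ x ∈ Ioo 0 (ρ ^ 2), √x ∈ Ioo 0 ρ := fun x hx =>
    ⟨sqrt_pos.2 hx.1, (sqrt_lt' hρ).2 hx.2⟩
  refine ⟨fun x => (μ / 4 * (u √x / √x ^ ν) -
    (ν + 1) * (besselFlux ν u u₁ √x / (2 * x ^ (ν + 1)))) / x, fun x hx => ?_, fun x hx => ?_,
    fun x hx => ?_⟩
  · have hs := (hmem x hx).1
    refine (((hu.hasDerivAt _ (hmem x hx)).comp x (hasDerivAt_sqrt hx.1.ne')).div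
      ((hasDerivAt_pow_of_ne_zero ν hs.ne').comp x (hasDerivAt_sqrt hx.1.ne'))
      (pow_pos hs ν).ne').congr_deriv ?_
    have hxs : x = √x ^ 2 := (sq_sqrt hx.1.le).symm
    simp only [besselFlux, Function.comp_apply]
    rw [hxs, sqrt_sq hs.le]
    field_simp
    ring
  · have hs := (hmem x hx).1
    refine (((hu.hasDerivAt_besselFlux (hmem x hx) hs.ne').comp x
      (hasDerivAt_sqrt hx.1.ne')).div ((hasDerivAt_pow_of_ne_zero (ν + 1) hx.1.ne').const_mul 2)
      (mul_pos two_pos (pow_pos hx.1 _)).ne').congr_deriv ?_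
    have hxs : x = √x ^ 2 := (sq_sqrt hx.1.le).symm
    simp only [Function.comp_apply]
    rw [hxs, sqrt_sq hs.le]
    push_cast
    field_simp
    ring
  · have := hx.1.ne'
    field_simp
    ring

theorem exists_contDiffOn_extension_left {f f₁ f₂ : ℝ → ℝ} {a b c l l₁ l₂ : ℝ} (hc : c ∈ Ioo a b)
    (hf : ∀ x ∈ Ioo c b, HasDerivAt f (f₁ x) x) (hf₁ : ∀ x ∈ Ioo c b, HasDerivAt f₁ (f₂ x) x)
    (hf₂ : ContinuousOn f₂ (Ioo c b)) (hl : Tendsto f (𝓝[>] c) (𝓝 l))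
    (hl₁ : Tendsto f₁ (𝓝[>] c) (𝓝 l₁)) (hl₂ : Tendsto f₂ (𝓝[>] c) (𝓝 l₂)) :
    ∃ H, ContDiffOn ℝ 2 H (Ioo a b) ∧ EqOn H f (Ioo c b) := by
  let T : ℝ → ℝ := fun x => l + l₁ * (x - c) + l₂ / 2 * (x - c) ^ 2
  let T₁ : ℝ → ℝ := fun x => l₁ + l₂ * (x - c)
  have hT : ∀ x, HasDerivAt T (T₁ x) x := fun x =>
    ((((hasDerivAt_id x).sub_const c).const_mul l₁).const_add l |>.add
      ((((hasDerivAt_id x).sub_const c).pow 2).const_mul (l₂ / 2))).congr_deriv (by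
        simp only [T₁, id]; ring)
  have hT₁ : ∀ x, HasDerivAt T₁ l₂ x := fun x =>
    ((((hasDerivAt_id x).sub_const c).const_mul l₂).const_add l₁).congr_deriv (mul_one _)
  have hTc : Tendsto T (𝓝[<] c) (𝓝 l) := by
    simpa [T] using (hT c).continuousAt.tendsto.mono_left nhdsWithin_le_nhds
  have hTc₁ : Tendsto T₁ (𝓝[<] c) (𝓝 l₁) := by
    simpa [T₁] using (hT₁ c).continuousAt.tendsto.mono_left nhdsWithin_le_nhds
  exact ⟨_, contDiffOn_two_of_hasDerivAt isOpen_Ioo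
    (hasDerivAt_glueAt hc (fun x _ => hT x) hf hTc hl hTc₁ hl₁)
    (hasDerivAt_glueAt hc (fun x _ => hT₁ x) hf₁ hTc₁ hl₁ tendsto_const_nhds hl₂)
    (continuousOn_glueAt continuousOn_const hf₂ tendsto_const_nhds hl₂),
    fun x hx => glueAt_of_gt hx.1⟩

/-- In the variable `x = r²` the Bessel equation for `u / r ^ ν` becomes
`x g'' + (ν + 1) g' - (μ / 4) g = 0`, for which `0` is a singular endpoint. -/
theorem SolvesODEOn.exists_eq_pow_mul (hu : SolvesBesselOn ν μ u u₁ u₂ (Ioo 0 ρ)) (hρ : 0 < ρ)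
    (hK : ∀ r ∈ Ioo 0 ρ, |u r| ≤ K) :
    ∃ H, ContDiffOn ℝ 2 H (Ioo (-1) (ρ ^ 2)) ∧ ∀ r ∈ Ioo 0 ρ, u r = r ^ ν * H (r ^ 2) := by
  have hρ2 : 0 < ρ ^ 2 := pow_pos hρ 2
  obtain ⟨g₂, hg⟩ := hu.comp_sqrt hρ
  have hend : IsSingularEndpoint (fun x => x) (fun _ => (ν : ℝ) + 1) (fun _ => -(μ / 4)) 0
      (ρ ^ 2) :=
    { lt := hρ2
      contDiffAt_A := contDiffAt_id
      contDiffAt_B := contDiffAt_const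
      contDiffAt_C := contDiffAt_const
      continuousOn_A := continuousOn_id
      continuousOn_B := continuousOn_const
      continuousOn_C := continuousOn_const
      A_eq_zero := rfl
      A_pos := fun x hx => hx.1
      B_pos := fun x _ => by positivity }
  have hP : IsIntegratingFactorOn (fun x : ℝ => x ^ (ν + 1)) (fun x => ((ν : ℝ) + 1) / x)
      (Ioo 0 (ρ ^ 2)) :=
    { pos := fun x hx => pow_pos hx.1 _
      hasDerivAt := fun x hx => (hasDerivAt_pow_of_ne_zero (ν + 1) hx.1.ne').congr_deriv
        (by push_cast; ring) }
  have hsqrt : Tendsto sqrt (𝓝[>] 0) (𝓝[>] 0) :=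
    tendsto_nhdsWithin_of_tendsto_nhds_of_eventually_within _
      ((continuous_sqrt.tendsto' 0 0 sqrt_zero).mono_left nhdsWithin_le_nhds)
      (eventually_of_mem self_mem_nhdsWithin fun x hx => sqrt_pos.2 hx)
  have hflux : Tendsto (fun x : ℝ => x ^ (ν + 1) * (besselFlux ν u u₁ √x / (2 * x ^ (ν + 1))))
      (𝓝[>] 0) (𝓝 0) := by
    have hhalf := ((hu.tendsto_besselFlux hρ hK).comp hsqrt).div_const 2
    rw [zero_div] at hhalf
    refine hhalf.congr' ?_
    filter_upwards [self_mem_nhdsWithin] with x (hx : 0 < x)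
    rw [Function.comp_apply]
    field_simp
  obtain ⟨g₀, hg₀⟩ := hend.exists_tendsto_of_tendsto_flux hP hg hflux
  obtain ⟨H, hH, hHg⟩ := exists_contDiffOn_extension_left ⟨neg_one_lt_zero, hρ2⟩ hg.hasDerivAt
    hg.hasDerivAt_deriv (hg.continuousOn_deriv₂ continuousOn_id continuousOn_const
      continuousOn_const fun x hx => hx.1.ne') hg₀ (hend.tendsto_deriv hP hg hg₀ hflux)
    (hend.tendsto_deriv₂ hP hg hg₀ hflux)
  refine ⟨H, hH, fun r hr => ?_⟩
  rw [hHg ⟨pow_pos hr.1 2, pow_lt_pow_left₀ hr.2 hr.1.le two_ne_zero⟩]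
  beta_reduce
  rw [sqrt_sq hr.1.le, mul_div_cancel₀ _ (pow_ne_zero _ hr.1.ne')]

end BesselOrigin

section UnitLayer

variable {ε t τ τ₀ : ℝ}

theorem phi11_eq_div (hε : 0 < ε) (t : ℝ) : phi11 ε t = phi11 1 (t / ε) := by
  simp [phi11, s0, s12, s2, s22, s3, div_nonneg_iff, div_le_one hε, hε.le, hε.not_ge]

theorem phi22_eq_div (hε : 0 < ε) (t : ℝ) : phi22 ε t = phi22 1 (t / ε) := by
  simp [phi22, s0, s12, s22, s32, div_nonneg_iff, div_le_one hε, hε.le, hε.not_ge]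

theorem phi2d_eq_div (hε : 0 < ε) (t : ℝ) : phi2d ε t = phi2d 1 (t / ε) := by
  simp [phi2d, s0, s12, s22, div_nonneg_iff, div_le_one hε, hε.le, hε.not_ge]

theorem s0_one_of_one_le (ht : 1 ≤ t) : s0 1 t = π := by
  rcases ht.eq_or_lt with rfl | h <;> simp [s0, *]

theorem s12_one_of_one_le (ht : 1 ≤ t) : s12 1 t = 0 := by
  rcases ht.eq_or_lt with rfl | h <;> simp [s12, *]

theorem s2_one_of_one_le (ht : 1 ≤ t) : s2 1 t = π / 4 := by
  rcases ht.eq_or_lt with rfl | h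
  · simp only [s2, zero_le_one, le_refl, and_self, ↓reduceIte, one_div, ne_eq, one_ne_zero,
      not_false_eq_true, div_self, one_pow, sub_self, sqrt_zero, mul_zero, mul_one, zero_mul,
      arcsin_one, zero_add]
    ring
  · simp [s2, h]

theorem s22_one_of_one_le (ht : 1 ≤ t) : s22 1 t = π / 4 := by
  rcases ht.eq_or_lt with rfl | h
  · simp only [s22, zero_le_one, le_refl, and_self, ↓reduceIte, one_div, ne_eq, one_ne_zero,
      not_false_eq_true, div_self, one_pow, sub_self, sqrt_zero, mul_zero, mul_one, zero_mul,
      arcsin_one, zero_add]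
    ring
  · simp [s22, h]

theorem phi11_one_of_one_le (ht : 1 ≤ t) : phi11 1 t = -1 / 8 := by
  rw [phi11, s0_one_of_one_le ht, s12_one_of_one_le ht, s2_one_of_one_le ht, s22_one_of_one_le ht]
  field_simp
  ring

theorem phi22_one_of_one_le (ht : 1 ≤ t) : phi22 1 t = -1 / 8 := by
  rw [phi22, s0_one_of_one_le ht, s12_one_of_one_le ht, s22_one_of_one_le ht]
  field_simp
  ring

theorem phi2d_one_of_one_le (ht : 1 ≤ t) : phi2d 1 t = 0 := by
  rw [phi2d, s12_one_of_one_le ht, zero_div]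

theorem one_sub_sq_nonneg (hτ : τ ∈ Icc 0 1) : 0 ≤ 1 - τ ^ 2 :=
  sub_nonneg.2 (pow_le_one₀ hτ.1 hτ.2)

theorem one_sub_sq_pos (hτ : τ ∈ Ioo 0 1) : 0 < 1 - τ ^ 2 :=
  sub_pos.2 (pow_lt_one₀ hτ.1.le hτ.2 two_ne_zero)

theorem s0_one (hτ : τ ∈ Icc 0 1) : s0 1 τ = π / 2 + τ * √(1 - τ ^ 2) + arcsin τ := by
  simp [s0, hτ.1, hτ.2]

theorem s12_one (hτ : τ ∈ Icc 0 1) : s12 1 τ = -(2 / 3) * √(1 - τ ^ 2) ^ 3 := by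
  simp [s12, hτ.1, hτ.2, rpow_div_two_eq_sqrt 3 (one_sub_sq_nonneg hτ)]

theorem s2_one (hτ : τ ∈ Icc 0 1) :
    s2 1 τ = π / 8 + 1 / 12 * (τ * √(1 - τ ^ 2) * (5 - 2 * τ ^ 2) + 3 * arcsin τ) := by
  simp [s2, hτ.1, hτ.2]

theorem s22_one (hτ : τ ∈ Icc 0 1) :
    s22 1 τ = π / 8 + 1 / 4 * (τ * √(1 - τ ^ 2) * (2 * τ ^ 2 - 1) + arcsin τ) := by
  simp [s22, hτ.1, hτ.2]

theorem s3_one (hτ : τ ∈ Icc 0 1) : s3 1 τ = -(2 / 15) * √(1 - τ ^ 2) ^ 5 := by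
  simp [s3, hτ.1, hτ.2, rpow_div_two_eq_sqrt 5 (one_sub_sq_nonneg hτ)]

theorem s32_one (hτ : τ ∈ Icc 0 1) :
    s32 1 τ = -(2 / 15) * (2 + 3 * τ ^ 2) * √(1 - τ ^ 2) ^ 3 := by
  simp [s32, hτ.1, hτ.2, rpow_div_two_eq_sqrt 3 (one_sub_sq_nonneg hτ)]

theorem continuousOn_s0 : ContinuousOn (s0 1) (Icc 0 1) :=
  ContinuousOn.congr (by fun_prop) fun _ => s0_one

theorem continuousOn_s12 : ContinuousOn (s12 1) (Icc 0 1) :=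
  ContinuousOn.congr (by fun_prop) fun _ => s12_one

theorem continuousOn_s2 : ContinuousOn (s2 1) (Icc 0 1) :=
  ContinuousOn.congr (by fun_prop) fun _ => s2_one

theorem continuousOn_s22 : ContinuousOn (s22 1) (Icc 0 1) :=
  ContinuousOn.congr (by fun_prop) fun _ => s22_one

theorem continuousOn_s3 : ContinuousOn (s3 1) (Icc 0 1) :=
  ContinuousOn.congr (by fun_prop) fun _ => s3_one

theorem continuousOn_s32 : ContinuousOn (s32 1) (Icc 0 1) :=
  ContinuousOn.congr (by fun_prop) fun _ => s32_one

theorem contDiffAt_sqrt_one_sub_sq (hτ : τ ∈ Ioo 0 1) :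
    ContDiffAt ℝ 1 (fun τ : ℝ => √(1 - τ ^ 2)) τ :=
  ContDiffAt.sqrt (by fun_prop) (one_sub_sq_pos hτ).ne'

theorem contDiffAt_arcsin_of_mem (hτ : τ ∈ Ioo 0 1) : ContDiffAt ℝ 1 arcsin τ :=
  contDiffAt_arcsin (by linarith [hτ.1]) hτ.2.ne

theorem eventually_mem_Icc (hτ : τ ∈ Ioo 0 1) : ∀ᶠ x in 𝓝 τ, x ∈ Icc (0 : ℝ) 1 :=
  Icc_mem_nhds hτ.1 hτ.2

theorem contDiffAt_s0 (hτ : τ ∈ Ioo 0 1) : ContDiffAt ℝ 1 (s0 1) τ := by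
  have := contDiffAt_sqrt_one_sub_sq hτ
  have := contDiffAt_arcsin_of_mem hτ
  exact ContDiffAt.congr_of_eventuallyEq (by fun_prop)
    ((eventually_mem_Icc hτ).mono fun _ => s0_one)

theorem contDiffAt_s12 (hτ : τ ∈ Ioo 0 1) : ContDiffAt ℝ 1 (s12 1) τ := by
  have := contDiffAt_sqrt_one_sub_sq hτ
  exact ContDiffAt.congr_of_eventuallyEq (by fun_prop)
    ((eventually_mem_Icc hτ).mono fun _ => s12_one)

theorem contDiffAt_s2 (hτ : τ ∈ Ioo 0 1) : ContDiffAt ℝ 1 (s2 1) τ := by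
  have := contDiffAt_sqrt_one_sub_sq hτ
  have := contDiffAt_arcsin_of_mem hτ
  exact ContDiffAt.congr_of_eventuallyEq (by fun_prop)
    ((eventually_mem_Icc hτ).mono fun _ => s2_one)

theorem contDiffAt_s22 (hτ : τ ∈ Ioo 0 1) : ContDiffAt ℝ 1 (s22 1) τ := by
  have := contDiffAt_sqrt_one_sub_sq hτ
  have := contDiffAt_arcsin_of_mem hτ
  exact ContDiffAt.congr_of_eventuallyEq (by fun_prop)
    ((eventually_mem_Icc hτ).mono fun _ => s22_one)

theorem contDiffAt_s3 (hτ : τ ∈ Ioo 0 1) : ContDiffAt ℝ 1 (s3 1) τ := by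
  have := contDiffAt_sqrt_one_sub_sq hτ
  exact ContDiffAt.congr_of_eventuallyEq (by fun_prop)
    ((eventually_mem_Icc hτ).mono fun _ => s3_one)

theorem contDiffAt_s32 (hτ : τ ∈ Ioo 0 1) : ContDiffAt ℝ 1 (s32 1) τ := by
  have := contDiffAt_sqrt_one_sub_sq hτ
  exact ContDiffAt.congr_of_eventuallyEq (by fun_prop)
    ((eventually_mem_Icc hτ).mono fun _ => s32_one)

theorem hasDerivAt_sqrt_one_sub_sq (hτ : τ ∈ Ioo 0 1) :
    HasDerivAt (fun τ : ℝ => √(1 - τ ^ 2)) (-τ / √(1 - τ ^ 2)) τ := by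
  refine (((hasDerivAt_pow 2 τ).const_sub 1).sqrt (one_sub_sq_pos hτ).ne').congr_deriv ?_
  have := (sqrt_pos.2 (one_sub_sq_pos hτ)).ne'
  field_simp
  norm_num

theorem hasDerivAt_arcsin_of_mem (hτ : τ ∈ Ioo 0 1) :
    HasDerivAt arcsin (1 / √(1 - τ ^ 2)) τ :=
  hasDerivAt_arcsin (by linarith [hτ.1]) hτ.2.ne

theorem hasDerivAt_s2_one (hτ : τ ∈ Ioo 0 1) :
    HasDerivAt (s2 1) (2 / 3 * √(1 - τ ^ 2) ^ 3) τ := by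
  have hpoly : HasDerivAt (fun τ : ℝ => 5 - 2 * τ ^ 2) (-(2 * (2 * τ))) τ := by
    simpa using ((hasDerivAt_pow 2 τ).const_mul 2).const_sub 5
  refine (HasDerivAt.congr_of_eventuallyEq (((((hasDerivAt_id τ).mul
    (hasDerivAt_sqrt_one_sub_sq hτ)).mul hpoly).add
    ((hasDerivAt_arcsin_of_mem hτ).const_mul 3)).const_mul (1 / 12) |>.const_add (π / 8))
    ((eventually_mem_Icc hτ).mono fun _ => s2_one)).congr_deriv ?_
  have hw := (sqrt_pos.2 (one_sub_sq_pos hτ)).ne'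
  have hτw : τ ^ 2 = 1 - √(1 - τ ^ 2) ^ 2 := by rw [sq_sqrt (one_sub_sq_pos hτ).le]; ring
  simp only [Pi.mul_apply, id]
  generalize √(1 - τ ^ 2) = w at hw hτw ⊢
  field_simp
  rw [hτw]
  ring

theorem hasDerivAt_s22_one (hτ : τ ∈ Ioo 0 1) :
    HasDerivAt (s22 1) (2 * τ ^ 2 * √(1 - τ ^ 2)) τ := by
  have hpoly : HasDerivAt (fun τ : ℝ => 2 * τ ^ 2 - 1) (2 * (2 * τ)) τ := by
    simpa using ((hasDerivAt_pow 2 τ).const_mul 2).sub_const 1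
  refine (HasDerivAt.congr_of_eventuallyEq (((((hasDerivAt_id τ).mul
    (hasDerivAt_sqrt_one_sub_sq hτ)).mul hpoly).add
    (hasDerivAt_arcsin_of_mem hτ)).const_mul (1 / 4) |>.const_add (π / 8))
    ((eventually_mem_Icc hτ).mono fun _ => s22_one)).congr_deriv ?_
  have hw := (sqrt_pos.2 (one_sub_sq_pos hτ)).ne'
  have hτw : τ ^ 2 = 1 - √(1 - τ ^ 2) ^ 2 := by rw [sq_sqrt (one_sub_sq_pos hτ).le]; ring
  simp only [Pi.mul_apply, id]
  generalize √(1 - τ ^ 2) = w at hw hτw ⊢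
  field_simp
  rw [hτw]
  ring

theorem monotoneOn_s2_one : MonotoneOn (s2 1) (Icc 0 1) := by
  refine monotoneOn_of_hasDerivWithinAt_nonneg (convex_Icc 0 1) continuousOn_s2
    (f' := fun τ => 2 / 3 * √(1 - τ ^ 2) ^ 3) (fun τ hτ => ?_) fun τ _ => by positivity
  rw [interior_Icc] at hτ ⊢
  exact (hasDerivAt_s2_one hτ).hasDerivWithinAt

theorem monotoneOn_s22_one : MonotoneOn (s22 1) (Icc 0 1) := by
  refine monotoneOn_of_hasDerivWithinAt_nonneg (convex_Icc 0 1) continuousOn_s22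
    (f' := fun τ => 2 * τ ^ 2 * √(1 - τ ^ 2)) (fun τ hτ => ?_) fun τ _ => by positivity
  rw [interior_Icc] at hτ ⊢
  exact (hasDerivAt_s22_one hτ).hasDerivWithinAt

theorem s2_one_le (hτ : τ ∈ Icc 0 1) : s2 1 τ ≤ π / 4 :=
  (monotoneOn_s2_one hτ (right_mem_Icc.2 zero_le_one) hτ.2).trans_eq (s2_one_of_one_le le_rfl)

theorem s22_one_le (hτ : τ ∈ Icc 0 1) : s22 1 τ ≤ π / 4 :=
  (monotoneOn_s22_one hτ (right_mem_Icc.2 zero_le_one) hτ.2).trans_eq (s22_one_of_one_le le_rfl)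

theorem le_s22_one (hτ : τ ∈ Icc 0 1) : π / 8 ≤ s22 1 τ := by
  simpa [s22] using monotoneOn_s22_one (left_mem_Icc.2 zero_le_one) hτ hτ.1

theorem s22_one_pos (hτ : τ ∈ Icc 0 1) : 0 < s22 1 τ :=
  (by positivity : 0 < π / 8).trans_le (le_s22_one hτ)

theorem le_s0_one (hτ : τ ∈ Icc 0 1) : π / 2 ≤ s0 1 τ := by
  rw [s0_one hτ, add_assoc]
  exact le_add_of_nonneg_right
    (add_nonneg (mul_nonneg hτ.1 (sqrt_nonneg _)) (arcsin_nonneg.2 hτ.1))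

theorem s12_one_sq_le (hτ : τ ∈ Icc 0 1) : s12 1 τ ^ 2 ≤ 4 / 9 := by
  have hw : √(1 - τ ^ 2) ≤ 1 := sqrt_le_one.2 (sub_le_self 1 (sq_nonneg τ))
  have hw6 : √(1 - τ ^ 2) ^ 6 ≤ 1 := pow_le_one₀ (sqrt_nonneg _) hw
  rw [s12_one hτ]
  linarith

theorem s3_one_mul_s12_one_nonneg (hτ : τ ∈ Icc 0 1) : 0 ≤ s3 1 τ * s12 1 τ := by
  rw [s3_one hτ, s12_one hτ]
  nlinarith [pow_nonneg (sqrt_nonneg (1 - τ ^ 2)) 8]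

theorem phi_denominator_neg (hτ : τ ∈ Icc 0 1) : s12 1 τ ^ 2 - s22 1 τ * s0 1 τ < 0 := by
  have hprod : π / 8 * (π / 2) ≤ s22 1 τ * s0 1 τ :=
    mul_le_mul (le_s22_one hτ) (le_s0_one hτ) (by positivity) (s22_one_pos hτ).le
  nlinarith [s12_one_sq_le hτ, pi_gt_three]

theorem continuousOn_phi_denominator :
    ContinuousOn (fun τ => s12 1 τ ^ 2 - s22 1 τ * s0 1 τ) (Icc 0 1) :=
  (continuousOn_s12.pow 2).sub (continuousOn_s22.mul continuousOn_s0)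

theorem continuousOn_phi11 : ContinuousOn (phi11 1) (Icc 0 1) :=
  (((continuousOn_s22.mul continuousOn_s2).sub (continuousOn_s3.mul continuousOn_s12)).const_mul
    (1 / 2)).div continuousOn_phi_denominator fun _ hτ => (phi_denominator_neg hτ).ne

theorem continuousOn_phi22 : ContinuousOn (phi22 1) (Icc 0 1) :=
  (((continuousOn_s22.pow 2).sub (continuousOn_s32.mul continuousOn_s12)).const_mul
    (1 / 2)).div continuousOn_phi_denominator fun _ hτ => (phi_denominator_neg hτ).ne

theorem continuousOn_phi2d : ContinuousOn (phi2d 1) (Icc 0 1) :=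
  continuousOn_s12.div continuousOn_phi_denominator fun _ hτ => (phi_denominator_neg hτ).ne

theorem contDiffAt_phi_denominator (hτ : τ ∈ Ioo 0 1) :
    ContDiffAt ℝ 1 (fun τ => s12 1 τ ^ 2 - s22 1 τ * s0 1 τ) τ :=
  ((contDiffAt_s12 hτ).pow 2).sub ((contDiffAt_s22 hτ).mul (contDiffAt_s0 hτ))

theorem contDiffAt_phi11 (hτ : τ ∈ Ioo 0 1) : ContDiffAt ℝ 1 (phi11 1) τ :=
  (contDiffAt_const.mul (((contDiffAt_s22 hτ).mul (contDiffAt_s2 hτ)).sub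
    ((contDiffAt_s3 hτ).mul (contDiffAt_s12 hτ)))).div (contDiffAt_phi_denominator hτ)
    (phi_denominator_neg (Ioo_subset_Icc_self hτ)).ne

theorem contDiffAt_phi22 (hτ : τ ∈ Ioo 0 1) : ContDiffAt ℝ 1 (phi22 1) τ :=
  (contDiffAt_const.mul (((contDiffAt_s22 hτ).pow 2).sub
    ((contDiffAt_s32 hτ).mul (contDiffAt_s12 hτ)))).div (contDiffAt_phi_denominator hτ)
    (phi_denominator_neg (Ioo_subset_Icc_self hτ)).ne

theorem contDiffAt_phi2d (hτ : τ ∈ Ioo 0 1) : ContDiffAt ℝ 1 (phi2d 1) τ :=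
  (contDiffAt_s12 hτ).div (contDiffAt_phi_denominator hτ)
    (phi_denominator_neg (Ioo_subset_Icc_self hτ)).ne

theorem phi22_numerator_eq (hτ : τ ∈ Icc 0 1) : s22 1 τ ^ 2 - s32 1 τ * s12 1 τ =
    s22 1 τ ^ 2 - 4 / 45 * ((2 + 3 * τ ^ 2) * (1 - τ ^ 2) ^ 3) := by
  rw [s32_one hτ, s12_one hτ]
  linear_combination (-(4 / 45) * (2 + 3 * τ ^ 2)) *
    congrArg (· ^ 3) (sq_sqrt (one_sub_sq_nonneg hτ))

theorem strictMonoOn_phi22_numerator :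
    StrictMonoOn (fun τ => s22 1 τ ^ 2 - s32 1 τ * s12 1 τ) (Icc 0 1) := by
  refine StrictMonoOn.congr (f₁ := fun τ => s22 1 τ ^ 2 - 4 / 45 * ((2 + 3 * τ ^ 2) *
    (1 - τ ^ 2) ^ 3)) ?_ fun τ hτ => (phi22_numerator_eq hτ).symm
  intro x hx y hy hxy
  have hs22 : s22 1 x ^ 2 ≤ s22 1 y ^ 2 :=
    pow_le_pow_left₀ (s22_one_pos hx).le (monotoneOn_s22_one hx hy hxy.le) 2
  have hpoly : StrictAntiOn (fun τ : ℝ => (2 + 3 * τ ^ 2) * (1 - τ ^ 2) ^ 3) (Icc 0 1) := by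
    refine strictAntiOn_of_hasDerivWithinAt_neg (convex_Icc 0 1) (by fun_prop)
      (f' := fun τ => -(6 * τ * (1 + 4 * τ ^ 2)) * (1 - τ ^ 2) ^ 2) (fun τ _ => ?_) ?_
    · refine (((((hasDerivAt_pow 2 τ).const_mul 3).const_add 2).mul
        (((hasDerivAt_pow 2 τ).const_sub 1).pow 3)).congr_deriv ?_).hasDerivWithinAt
      simp only [Pi.pow_apply]
      push_cast
      ring
    · intro τ hτ
      rw [interior_Icc] at hτ
      have := hτ.1
      have := one_sub_sq_pos hτ
      rw [neg_mul]
      exact neg_neg_of_pos (by positivity)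
  linarith [hpoly hx hy hxy]

theorem phi22_one_sign (hτ : τ ∈ Icc 0 1) (hτ₀ : τ₀ ∈ Icc 0 1) (h₀ : phi22 1 τ₀ = 0) :
    (τ < τ₀ → 0 < phi22 1 τ) ∧ (τ₀ < τ → phi22 1 τ < 0) := by
  have hnum : s22 1 τ₀ ^ 2 - s32 1 τ₀ * s12 1 τ₀ = 0 := by
    rw [phi22, div_eq_zero_iff, or_iff_left (phi_denominator_neg hτ₀).ne] at h₀
    linarith
  refine ⟨fun h => div_pos_of_neg_of_neg ?_ (phi_denominator_neg hτ),
    fun h => div_neg_of_pos_of_neg ?_ (phi_denominator_neg hτ)⟩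
  · have := strictMonoOn_phi22_numerator hτ hτ₀ h
    simp only [hnum] at this
    linarith
  · have := strictMonoOn_phi22_numerator hτ₀ hτ h
    simp only [hnum] at this
    linarith

theorem lt_third_of_phi22_one_eq_zero (hτ₀ : τ₀ ∈ Icc 0 1) (h₀ : phi22 1 τ₀ = 0) : τ₀ < 1 / 3 := by
  have hthird : (1 / 3 : ℝ) ∈ Icc 0 1 := by norm_num
  have hpos : 0 < s22 1 (1 / 3) ^ 2 - s32 1 (1 / 3) * s12 1 (1 / 3) := by
    rw [phi22_numerator_eq hthird]
    nlinarith [le_s22_one hthird, pi_gt_d2]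
  have hneg : phi22 1 (1 / 3) < 0 :=
    div_neg_of_pos_of_neg (by linarith) (phi_denominator_neg hthird)
  by_contra! h
  rcases h.eq_or_lt with rfl | h
  · exact hneg.ne h₀
  · exact hneg.not_gt ((phi22_one_sign hthird hτ₀ h₀).1 h)

theorem phi11_div_add_phi2d_pos {r : ℝ} (hτ : τ ∈ Icc 0 1) (hτ3 : τ ≤ 1 / 3) (hr : 2 / 3 ≤ r) :
    0 < phi11 1 τ / r + phi2d 1 τ := by
  have hr0 : 0 < r := by linarith
  have hw : 8 / 9 ≤ √(1 - τ ^ 2) ^ 2 := by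
    rw [sq_sqrt (one_sub_sq_nonneg hτ)]
    nlinarith [hτ.1]
  have hw1 : √(1 - τ ^ 2) ≤ 1 := sqrt_le_one.2 (sub_le_self 1 (sq_nonneg τ))
  have hs12 : s12 1 τ ≤ -(128 / 243) := by
    have hw3 : (8 / 9 : ℝ) ^ 2 ≤ √(1 - τ ^ 2) ^ 3 := calc
      (8 / 9 : ℝ) ^ 2 ≤ (√(1 - τ ^ 2) ^ 2) ^ 2 := pow_le_pow_left₀ (by norm_num) hw 2
      _ = √(1 - τ ^ 2) ^ 4 := by ring
      _ ≤ √(1 - τ ^ 2) ^ 3 := pow_le_pow_of_le_one (sqrt_nonneg _) hw1 (by norm_num)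
    rw [s12_one hτ]
    linarith
  have hs : s22 1 τ * s2 1 τ ≤ π / 4 * (π / 4) := calc
    s22 1 τ * s2 1 τ ≤ s22 1 τ * (π / 4) :=
      mul_le_mul_of_nonneg_left (s2_one_le hτ) (s22_one_pos hτ).le
    _ ≤ π / 4 * (π / 4) := mul_le_mul_of_nonneg_right (s22_one_le hτ) (by positivity)
  have heq : phi11 1 τ / r + phi2d 1 τ = (1 / 2 * (s22 1 τ * s2 1 τ - s3 1 τ * s12 1 τ) +
      r * s12 1 τ) / (r * (s12 1 τ ^ 2 - s22 1 τ * s0 1 τ)) := by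
    have := (phi_denominator_neg hτ).ne
    rw [phi11, phi2d]
    field_simp
  rw [heq]
  refine div_pos_of_neg_of_neg ?_ (mul_neg_of_pos_of_neg hr0 (phi_denominator_neg hτ))
  nlinarith [s3_one_mul_s12_one_nonneg hτ, pi_lt_d2, pi_pos]

end UnitLayer

section RadialCoefficients

variable {ε r0 r : ℝ}

/-- The rescaled distance `(1 - r) / ε` to the unit circle, clamped to `[0, 1]`: it is constant
outside the boundary layer, and beyond `r = 1`. -/
noncomputable def layerDepth (ε r : ℝ) : ℝ :=
  max 0 (min 1 ((1 - r) / ε))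

/-- The coefficient of `u''` in the radial equation, continued beyond `r = 1`. -/
noncomputable def radialA (ε r : ℝ) : ℝ :=
  phi22 1 (layerDepth ε r)

/-- The coefficient of `u'` in the radial equation, continued beyond `r = 1`. -/
noncomputable def radialB (ε r : ℝ) : ℝ :=
  phi11 1 (layerDepth ε r) / r + phi2d 1 (layerDepth ε r)

/-- The coefficient of `u` in the radial equation with all terms on one side, continued beyond
`r = 1`. -/
noncomputable def radialC (ε lam : ℝ) (ν : ℕ) (r : ℝ) : ℝ :=
  -(ν ^ 2 / r ^ 2 * phi11 1 (layerDepth ε r)) - lam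

theorem layerDepth_mem_Icc (ε r : ℝ) : layerDepth ε r ∈ Icc 0 1 :=
  ⟨le_max_left _ _, max_le zero_le_one (min_le_left _ _)⟩

theorem continuous_layerDepth (ε : ℝ) : Continuous (layerDepth ε) := by
  unfold layerDepth
  fun_prop

theorem layerDepth_of_le (hε : 0 < ε) (hr : r ≤ 1 - ε) : layerDepth ε r = 1 := by
  rw [layerDepth, min_eq_left ((one_le_div hε).2 (by linarith)), max_eq_right zero_le_one]

theorem layerDepth_of_mem_Icc (hε : 0 < ε) (hr : r ∈ Icc (1 - ε) 1) :
    layerDepth ε r = (1 - r) / ε := by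
  rw [layerDepth, min_eq_right ((div_le_one hε).2 (by linarith [hr.1])),
    max_eq_right (div_nonneg (by linarith [hr.2]) hε.le)]

theorem layerDepth_one_sub (hε : 0 < ε) (hr0 : r0 ∈ Icc 0 ε) :
    layerDepth ε (1 - r0) = r0 / ε := by
  rw [layerDepth_of_mem_Icc hε ⟨by linarith [hr0.2], by linarith [hr0.1]⟩, sub_sub_cancel]

theorem eq_layerDepth {f : ℝ → ℝ → ℝ} {c : ℝ} (hε : 0 < ε) (hf : ∀ t, f ε t = f 1 (t / ε))
    (hfc : ∀ t, 1 ≤ t → f 1 t = c) (hr : r ≤ 1) : f ε (1 - r) = f 1 (layerDepth ε r) := by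
  rcases le_total r (1 - ε) with h | h
  · rw [hf, hfc _ ((one_le_div hε).2 (by linarith)), layerDepth_of_le hε h, hfc 1 le_rfl]
  · rw [hf, layerDepth_of_mem_Icc hε ⟨h, hr⟩]

theorem phi11_one_sub (hε : 0 < ε) (hr : r ≤ 1) : phi11 ε (1 - r) = phi11 1 (layerDepth ε r) :=
  eq_layerDepth hε (phi11_eq_div hε) (fun _ => phi11_one_of_one_le) hr

theorem phi22_one_sub (hε : 0 < ε) (hr : r ≤ 1) : phi22 ε (1 - r) = phi22 1 (layerDepth ε r) :=
  eq_layerDepth hε (phi22_eq_div hε) (fun _ => phi22_one_of_one_le) hr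

theorem phi2d_one_sub (hε : 0 < ε) (hr : r ≤ 1) : phi2d ε (1 - r) = phi2d 1 (layerDepth ε r) :=
  eq_layerDepth hε (phi2d_eq_div hε) (fun _ => phi2d_one_of_one_le) hr

theorem continuous_comp_layerDepth {f : ℝ → ℝ} (hf : ContinuousOn f (Icc 0 1)) :
    Continuous fun r => f (layerDepth ε r) :=
  hf.comp_continuous (continuous_layerDepth ε) (layerDepth_mem_Icc ε)

theorem contDiffAt_comp_layerDepth {f : ℝ → ℝ} (hε : 0 < ε) (hr0 : r0 ∈ Ioo 0 ε)
    (hf : ContDiffAt ℝ 1 f (r0 / ε)) : ContDiffAt ℝ 1 (fun r => f (layerDepth ε r)) (1 - r0) := by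
  refine ContDiffAt.congr_of_eventuallyEq (f := fun r => f ((1 - r) / ε)) ?_ ?_
  · exact ContDiffAt.comp (1 - r0) (by rwa [sub_sub_cancel]) (by fun_prop)
  · filter_upwards [Icc_mem_nhds (by linarith [hr0.2] : 1 - ε < 1 - r0)
      (by linarith [hr0.1] : 1 - r0 < 1)] with r hr
    rw [layerDepth_of_mem_Icc hε hr]

theorem div_mem_Ioo_of_mem_Ioo (hr0 : r0 ∈ Ioo 0 ε) : r0 / ε ∈ Ioo 0 1 :=
  have hε : 0 < ε := hr0.1.trans hr0.2
  ⟨div_pos hr0.1 hε, (div_lt_one hε).2 hr0.2⟩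

theorem lt_layerDepth (hr0 : r0 ∈ Ioo 0 ε) (hr : r < 1 - r0) : r0 / ε < layerDepth ε r :=
  have hε : 0 < ε := hr0.1.trans hr0.2
  lt_max_of_lt_right (lt_min (div_mem_Ioo_of_mem_Ioo hr0).2
    (div_lt_div_of_pos_right (by linarith) hε))

theorem layerDepth_lt (hr0 : r0 ∈ Ioo 0 ε) (hr : 1 - r0 < r) : layerDepth ε r < r0 / ε :=
  have hε : 0 < ε := hr0.1.trans hr0.2
  max_lt (div_mem_Ioo_of_mem_Ioo hr0).1
    (min_lt_of_right_lt (div_lt_div_of_pos_right (by linarith) hε))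

theorem phi22_one_div_eq_zero (hr0 : r0 ∈ Ioo 0 ε) (h0 : phi22 ε r0 = 0) : phi22 1 (r0 / ε) = 0 :=
  (phi22_eq_div (hr0.1.trans hr0.2) r0).symm.trans h0

theorem radialA_neg (hr0 : r0 ∈ Ioo 0 ε) (h0 : phi22 ε r0 = 0) (hr : r < 1 - r0) :
    radialA ε r < 0 :=
  (phi22_one_sign (layerDepth_mem_Icc ε r) (Ioo_subset_Icc_self (div_mem_Ioo_of_mem_Ioo hr0))
    (phi22_one_div_eq_zero hr0 h0)).2 (lt_layerDepth hr0 hr)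

theorem radialA_pos (hr0 : r0 ∈ Ioo 0 ε) (h0 : phi22 ε r0 = 0) (hr : 1 - r0 < r) :
    0 < radialA ε r :=
  (phi22_one_sign (layerDepth_mem_Icc ε r) (Ioo_subset_Icc_self (div_mem_Ioo_of_mem_Ioo hr0))
    (phi22_one_div_eq_zero hr0 h0)).1 (layerDepth_lt hr0 hr)

theorem radialB_pos (hε1 : ε < 1) (hr0 : r0 ∈ Ioo 0 ε) (h0 : phi22 ε r0 = 0) (hr : 1 - r0 ≤ r) :
    0 < radialB ε r := by
  have hε : 0 < ε := hr0.1.trans hr0.2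
  have hτ₀ := lt_third_of_phi22_one_eq_zero (Ioo_subset_Icc_self (div_mem_Ioo_of_mem_Ioo hr0))
    (phi22_one_div_eq_zero hr0 h0)
  have hdepth : layerDepth ε r ≤ r0 / ε := by
    rcases hr.eq_or_lt with rfl | h
    · exact (layerDepth_one_sub hε (Ioo_subset_Icc_self hr0)).le
    · exact (layerDepth_lt hr0 h).le
  refine phi11_div_add_phi2d_pos (layerDepth_mem_Icc ε r) (hdepth.trans hτ₀.le) ?_
  rw [div_lt_iff₀ hε] at hτ₀
  linarith

theorem continuous_radialA (ε : ℝ) : Continuous (radialA ε) :=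
  continuous_comp_layerDepth continuousOn_phi22

theorem continuousOn_radialB (ε : ℝ) : ContinuousOn (radialB ε) (Ioi 0) :=
  ((continuous_comp_layerDepth continuousOn_phi11).continuousOn.div continuousOn_id
    fun _ hr => (mem_Ioi.1 hr).ne').add (continuous_comp_layerDepth continuousOn_phi2d).continuousOn

theorem signChange_radial (hε1 : ε < 1) (hr0 : r0 ∈ Ioo 0 ε) (h0 : phi22 ε r0 = 0) (lam : ℝ)
    (ν : ℕ) : SignChange (radialA ε) (radialB ε) (radialC ε lam ν) 0 (1 - r0) 2 := by
  have hε : 0 < ε := hr0.1.trans hr0.2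
  have hτ₀ := div_mem_Ioo_of_mem_Ioo hr0
  have hc : 0 < 1 - r0 := by linarith [hr0.2]
  have hsmooth : ContDiffAt ℝ 1 (fun r : ℝ => (ν : ℝ) ^ 2 / r ^ 2) (1 - r0) :=
    contDiffAt_const.div (contDiffAt_id.pow 2) (pow_pos hc 2).ne'
  have hcont : ContinuousOn (fun r : ℝ => (ν : ℝ) ^ 2 / r ^ 2) (Ioi 0) :=
    continuousOn_const.div (continuousOn_id.pow 2) fun _ hr => (pow_pos (mem_Ioi.1 hr) 2).ne'
  have h11 := contDiffAt_comp_layerDepth hε hr0 (contDiffAt_phi11 hτ₀)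
  have h11' := (continuous_comp_layerDepth (ε := ε) continuousOn_phi11).continuousOn (s := Ioi 0)
  exact
    { mem := ⟨hc, by linarith [hr0.1]⟩
      contDiffAt_A := contDiffAt_comp_layerDepth hε hr0 (contDiffAt_phi22 hτ₀)
      contDiffAt_B := (h11.div contDiffAt_id hc.ne').add
        (contDiffAt_comp_layerDepth hε hr0 (contDiffAt_phi2d hτ₀))
      contDiffAt_C := (hsmooth.mul h11).neg.sub contDiffAt_const
      continuousOn_A := (continuous_radialA ε).continuousOn
      continuousOn_B := (continuousOn_radialB ε).mono Ioc_subset_Ioi_self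
      continuousOn_C := ((hcont.mul h11').neg.sub continuousOn_const).mono Ioc_subset_Ioi_self
      A_eq_zero := by
        rw [radialA, layerDepth_one_sub hε (Ioo_subset_Icc_self hr0), phi22_one_div_eq_zero hr0 h0]
      A_neg := fun r hr => radialA_neg hr0 h0 hr.2
      A_pos := fun r hr => radialA_pos hr0 h0 hr.1
      B_pos := fun r hr => radialB_pos hε1 hr0 h0 hr.1 }

theorem IsRadSol.exists_solvesODEOn {lam : ℝ} {ν : ℕ} {s : Set ℝ} {u u₁ : ℝ → ℝ} (hε : 0 < ε)
    (hs : s ⊆ Iic 1) (hu : IsRadSol ε lam ν s u u₁) :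
    ∃ u₂, SolvesODEOn (radialA ε) (radialB ε) (radialC ε lam ν) u u₁ u₂ s := by
  choose! h1 u₂ h2 heq using hu
  refine ⟨u₂, h1, h2, fun r hr => ?_⟩
  have heq := heq r hr
  rw [phi11_one_sub hε (hs hr), phi22_one_sub hε (hs hr), phi2d_one_sub hε (hs hr)] at heq
  rw [radialA, radialB, radialC]
  linear_combination heq

theorem SolvesODEOn.solvesBesselOn_of_radial {lam δ : ℝ} {ν : ℕ} {u u₁ u₂ : ℝ → ℝ} (hε : 0 < ε)
    (hδ : δ ≤ 1 - ε)
    (hu : SolvesODEOn (radialA ε) (radialB ε) (radialC ε lam ν) u u₁ u₂ (Ioo 0 δ)) :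
    SolvesBesselOn ν (-8 * lam) u u₁ u₂ (Ioo 0 δ) where
  hasDerivAt := hu.hasDerivAt
  hasDerivAt_deriv := hu.hasDerivAt_deriv
  eq_zero r hr := by
    have heq := hu.eq_zero r hr
    have hr0 := hr.1.ne'
    rw [radialA, radialB, radialC, layerDepth_of_le hε (hr.2.le.trans hδ),
      phi11_one_of_one_le le_rfl, phi22_one_of_one_le le_rfl, phi2d_one_of_one_le le_rfl] at heq
    field_simp at heq
    linear_combination -heq

theorem isIntegratingFactorOn_pd (hε1 : ε < 1) (hr0 : r0 ∈ Ioo 0 ε) (h0 : phi22 ε r0 = 0) :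
    IsIntegratingFactorOn (pd ε r0) (fun r => radialB ε r / radialA ε r) (Ioo 0 (1 - r0)) := by
  have hε : 0 < ε := hr0.1.trans hr0.2
  have hq : EqOn (fun r => radialB ε r / radialA ε r) (fun r =>
      (phi11 ε (1 - r) + r * phi2d ε (1 - r)) / (r * phi22 ε (1 - r))) (Ioo 0 (1 - r0)) := by
    intro r hr
    have hr1 : r ≤ 1 := by linarith [hr.2, hr0.1]
    have hr := hr.1.ne'
    simp only [phi11_one_sub hε hr1, phi22_one_sub hε hr1, phi2d_one_sub hε hr1, radialA, radialB]
    rw [← mul_div_mul_left _ _ hr, mul_add, mul_div_cancel₀ _ hr]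
  have hcont : ContinuousOn (fun r => radialB ε r / radialA ε r) (Ioo 0 (1 - r0)) :=
    ((continuousOn_radialB ε).mono Ioo_subset_Ioi_self).div (continuous_radialA ε).continuousOn
      fun r hr => (radialA_neg hr0 h0 hr.2).ne
  have hmem : 1 - ε ∈ Ioo 0 (1 - r0) := ⟨by linarith, by linarith [hr0.2]⟩
  have hpos : 0 < 1 / 8 * (1 - ε) := by linarith
  refine ((isIntegratingFactorOn_exp_integral (hcont.congr hq.symm) hmem).const_mul hpos).congr
    isOpen_Ioo (fun r hr => ?_) hq
  rw [pd, sign_of_pos (sub_pos.2 hr.2), mul_one]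

end RadialCoefficients

section Disc

variable {F : ℂ → ℝ} {U U₁ U₂ H : ℝ → ℝ} {ν : ℕ} {b d r : ℝ}

theorem norm_pol (hr : 0 ≤ r) (θ : ℝ) : ‖pol r θ‖ = r := by
  rw [pol, norm_mul, Complex.norm_exp_ofReal_mul_I, mul_one, Complex.norm_real, norm_of_nonneg hr]

theorem pol_ne_zero (hr : 0 < r) (θ : ℝ) : pol r θ ≠ 0 :=
  norm_pos_iff.1 ((norm_pol hr.le θ).symm ▸ hr)

theorem re_pol_pow (r θ : ℝ) (ν : ℕ) : (pol r θ ^ ν).re = r ^ ν * cos (ν * θ) := by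
  have hexp : Complex.exp (θ * Complex.I) ^ ν = Complex.exp ((ν * θ : ℝ) * Complex.I) := by
    rw [← Complex.exp_nat_mul]
    push_cast
    ring_nf
  rw [pol, mul_pow, hexp, ← Complex.ofReal_pow, Complex.re_ofReal_mul,
    Complex.exp_ofReal_mul_I_re]

theorem hasDerivAt_pol (r θ : ℝ) :
    HasDerivAt (fun t => pol t θ) (Complex.exp (θ * Complex.I)) r := by
  simpa [pol] using (Complex.ofRealCLM.hasDerivAt (x := r)).mul_const (Complex.exp (θ * Complex.I))

theorem tendstoUniformly_mul_Fr {P : ℝ → ℝ} {R : ℝ} (hR0 : 0 < R) (hR1 : R < 1)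
    (hP : Tendsto P (𝓝[<] R) (𝓝 0)) (hF : ContDiffOn ℝ 1 F (Metric.ball 0 1)) :
    TendstoUniformly (fun r θ => P r * Fr F r θ) (fun _ => 0) (𝓝[<] R) := by
  have hsub : Metric.closedBall (0 : ℂ) R ⊆ Metric.ball 0 1 := Metric.closedBall_subset_ball hR1
  obtain ⟨K, hK⟩ := (isCompact_closedBall (0 : ℂ) R).exists_bound_of_continuousOn
    ((hF.continuousOn_fderiv_of_isOpen Metric.isOpen_ball le_rfl).mono hsub)
  have hFr : ∀ r ∈ Ioo 0 R, ∀ θ, |Fr F r θ| ≤ K := by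
    intro r hr θ
    have hmem : pol r θ ∈ Metric.closedBall 0 R := by
      rw [mem_closedBall_zero_iff, norm_pol hr.1.le]
      exact hr.2.le
    have hdiff : DifferentiableAt ℝ F (pol r θ) :=
      (hF.differentiableOn one_ne_zero).differentiableAt
        (Metric.isOpen_ball.mem_nhds (hsub hmem))
    have hchain : Fr F r θ = fderiv ℝ F (pol r θ) (Complex.exp (θ * Complex.I)) :=
      (hdiff.hasFDerivAt.comp_hasDerivAt r (hasDerivAt_pol r θ)).deriv
    rw [hchain]
    calc |fderiv ℝ F (pol r θ) (Complex.exp (θ * Complex.I))|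
        ≤ ‖fderiv ℝ F (pol r θ)‖ * ‖Complex.exp (θ * Complex.I)‖ :=
          (fderiv ℝ F (pol r θ)).le_opNorm _
      _ = ‖fderiv ℝ F (pol r θ)‖ := by rw [Complex.norm_exp_ofReal_mul_I, mul_one]
      _ ≤ K := hK _ hmem
  have hPK : Tendsto (fun r => |P r| * K) (𝓝[<] R) (𝓝 0) := by
    simpa using hP.abs.mul_const K
  rw [Metric.tendstoUniformly_iff]
  intro e he
  filter_upwards [hPK.eventually_lt_const he, Ioo_mem_nhdsLT hR0] with r hlt hr θ
  rw [dist_zero_left, norm_mul]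
  exact (mul_le_mul_of_nonneg_left (hFr r hr θ) (abs_nonneg _)).trans_lt hlt

/-- The value at the origin is prescribed by the factor `H`, since `U ‖z‖ / ‖z‖ ^ ν` is junk
there. -/
theorem exists_contDiffOn_ball_of_eq_pow_mul (hd : 0 < d) (hU : ContDiffOn ℝ 2 U (Ioo 0 b))
    (hH : ContDiffAt ℝ 2 H 0) (hUH : ∀ r ∈ Ioo 0 d, U r = r ^ ν * H (r ^ 2)) :
    ∃ F : ℂ → ℝ, ContDiffOn ℝ 2 F (Metric.ball 0 b) ∧
      ∀ r > 0, ∀ θ, F (pol r θ) = U r * cos (ν * θ) := by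
  let G : ℂ → ℝ := fun z => H (‖z‖ ^ 2) * (z ^ ν).re
  let F : ℂ → ℝ := Function.update (fun z => U ‖z‖ / ‖z‖ ^ ν * (z ^ ν).re) 0 (G 0)
  have hF : ∀ z ≠ 0, F z = U ‖z‖ / ‖z‖ ^ ν * (z ^ ν).re := fun z hz => Function.update_of_ne hz _ _
  have hre : ContDiff ℝ 2 (fun z : ℂ => (z ^ ν).re) :=
    Complex.reCLM.contDiff.comp (contDiff_id.pow ν)
  refine ⟨F, fun z hz => ContDiffAt.contDiffWithinAt ?_, fun r hr θ => ?_⟩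
  · rcases eq_or_ne z 0 with rfl | hz0
    · have hG : ContDiffAt ℝ 2 G 0 :=
        (ContDiffAt.comp (0 : ℂ) (by simpa using hH) (contDiff_norm_sq ℝ).contDiffAt).mul
          hre.contDiffAt
      refine hG.congr_of_eventuallyEq ?_
      filter_upwards [Metric.ball_mem_nhds (0 : ℂ) hd] with w hw
      rcases eq_or_ne w 0 with rfl | hw0
      · exact Function.update_self _ _ _
      · have hn : 0 < ‖w‖ := norm_pos_iff.2 hw0
        rw [hF w hw0, hUH ‖w‖ ⟨hn, mem_ball_zero_iff.1 hw⟩,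
          mul_div_cancel_left₀ _ (pow_ne_zero _ hn.ne')]
    · have hn : 0 < ‖z‖ := norm_pos_iff.2 hz0
      have hUz : ContDiffAt ℝ 2 U ‖z‖ :=
        hU.contDiffAt (isOpen_Ioo.mem_nhds ⟨hn, mem_ball_zero_iff.1 hz⟩)
      have hnorm : ContDiffAt ℝ 2 (fun z : ℂ => ‖z‖) z := contDiffAt_norm ℝ hz0
      refine (((hUz.comp z hnorm).div (hnorm.pow ν) (pow_ne_zero _ hn.ne')).mul
        hre.contDiffAt).congr_of_eventuallyEq ?_
      filter_upwards [isOpen_ne.mem_nhds hz0] with w hw using hF w hw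
  · rw [hF _ (pol_ne_zero hr θ), norm_pol hr.le, re_pol_pow]
    have := (pow_pos hr ν).ne'
    field_simp

theorem Fr_eq_of_polar {s : Set ℝ} (hs : IsOpen s) (hU : ∀ r ∈ s, HasDerivAt U (U₁ r) r)
    (hF : ∀ r ∈ s, ∀ θ, F (pol r θ) = U r * cos (ν * θ)) (hr : r ∈ s) (θ : ℝ) :
    Fr F r θ = U₁ r * cos (ν * θ) :=
  (((hU r hr).mul_const (cos (ν * θ))).congr_of_eventuallyEq
    (eventually_of_mem (hs.mem_nhds hr) fun t ht => hF t ht θ)).deriv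

theorem Frr_eq_of_polar {s : Set ℝ} (hs : IsOpen s) (hU : ∀ r ∈ s, HasDerivAt U (U₁ r) r)
    (hU₁ : ∀ r ∈ s, HasDerivAt U₁ (U₂ r) r)
    (hF : ∀ r ∈ s, ∀ θ, F (pol r θ) = U r * cos (ν * θ)) (hr : r ∈ s) (θ : ℝ) :
    Frr F r θ = U₂ r * cos (ν * θ) :=
  (((hU₁ r hr).mul_const (cos (ν * θ))).congr_of_eventuallyEq
    (eventually_of_mem (hs.mem_nhds hr) fun _ ht => Fr_eq_of_polar hs hU hF ht θ)).deriv

theorem Ftt_eq_of_polar (hF : ∀ θ, F (pol r θ) = U r * cos (ν * θ)) (θ : ℝ) :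
    Ftt F r θ = -ν ^ 2 * (U r * cos (ν * θ)) := by
  have hlin : ∀ s : ℝ, HasDerivAt (fun s : ℝ => ν * s) ν s := fun s => by
    simpa using (hasDerivAt_id s).const_mul (ν : ℝ)
  have hderiv : deriv (fun s => F (pol r s)) = fun s => U r * (-sin (ν * s) * ν) := by
    rw [funext hF]
    exact funext fun s => ((hlin s).cos.const_mul (U r)).deriv
  rw [Ftt, hderiv, (((hlin θ).sin.fun_neg.mul_const (ν : ℝ)).const_mul (U r)).deriv]
  ring

theorem isDiscSol_of_polar {ε lam : ℝ} (hε : 0 < ε) (hb : 1 < b)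
    (hU : SolvesODEOn (radialA ε) (radialB ε) (radialC ε lam ν) U U₁ U₂ (Ioo 0 b))
    (hFC : ContDiffOn ℝ 2 F (Metric.ball 0 b))
    (hF : ∀ r > 0, ∀ θ, F (pol r θ) = U r * cos (ν * θ)) : IsDiscSol ε lam F := by
  refine ⟨hFC.mono (Metric.closedBall_subset_ball hb), fun r hr θ => ?_⟩
  have hr' : r ∈ Ioo 0 b := ⟨hr.1, hr.2.trans_lt hb⟩
  have hFs : ∀ r ∈ Ioo 0 b, ∀ θ, F (pol r θ) = U r * cos (ν * θ) := fun r hr => hF r hr.1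
  rw [Fr_eq_of_polar isOpen_Ioo hU.hasDerivAt hFs hr',
    Frr_eq_of_polar isOpen_Ioo hU.hasDerivAt hU.hasDerivAt_deriv hFs hr',
    Ftt_eq_of_polar (hF r hr.1), hF r hr.1, phi11_one_sub hε hr.2, phi22_one_sub hε hr.2,
    phi2d_one_sub hε hr.2]
  have heq := hU.eq_zero r hr'
  rw [radialA, radialB, radialC] at heq
  linear_combination cos (ν * θ) * heq

end Disc

section Main

variable {ε r0 : ℝ}

theorem tendsto_pd (hε1 : ε < 1) (hr0 : r0 ∈ Ioo 0 ε) (h0 : phi22 ε r0 = 0) :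
    Tendsto (pd ε r0) (𝓝[<] (1 - r0)) (𝓝 0) :=
  (signChange_radial hε1 hr0 h0 0 0).tendsto_integratingFactor_left
    (isIntegratingFactorOn_pd hε1 hr0 h0)

theorem exists_isDiscSol {lam K δ : ℝ} {ν : ℕ} {u u' : ℝ → ℝ} (hε1 : ε < 1)
    (hr0 : r0 ∈ Ioo 0 ε) (h0 : phi22 ε r0 = 0) (hu : IsRadSol ε lam ν (Ioo 0 (1 - r0)) u u')
    (hδ : 0 < δ) (hK : ∀ r ∈ Ioo 0 δ, |u r| ≤ K)
    (hflux : Tendsto (fun r => pd ε r0 r * u' r) (𝓝[<] (1 - r0)) (𝓝 0)) :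
    ∃ F : ℂ → ℝ, IsDiscSol ε lam F ∧
      ∀ r ∈ Ioo 0 (1 - r0), ∀ θ, F (pol r θ) = u r * cos (ν * θ) := by
  have hε : 0 < ε := hr0.1.trans hr0.2
  have hsub : Ioo 0 (1 - r0) ⊆ Iic 1 := fun r hr => by
    rw [mem_Iic]
    linarith [hr.2, hr0.1]
  obtain ⟨u₂, hu⟩ := hu.exists_solvesODEOn hε hsub
  obtain ⟨U, U₁, U₂, hU, hU₂, hUu⟩ := (signChange_radial hε1 hr0 h0 lam ν).exists_extension
    (isIntegratingFactorOn_pd hε1 hr0 h0) hu hflux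
  have hρ : 0 < min δ (1 - ε) := lt_min hδ (by linarith)
  have hρsub : Ioo 0 (min δ (1 - ε)) ⊆ Ioo 0 (1 - r0) :=
    Ioo_subset_Ioo_right ((min_le_right _ _).trans (by linarith [hr0.2]))
  obtain ⟨H, hH, huH⟩ := ((hu.mono hρsub).solvesBesselOn_of_radial hε
    (min_le_right _ _)).exists_eq_pow_mul hρ
      fun r hr => hK r ⟨hr.1, hr.2.trans_le (min_le_left _ _)⟩
  obtain ⟨F, hFC, hF⟩ := exists_contDiffOn_ball_of_eq_pow_mul hρ
    (contDiffOn_two_of_hasDerivAt isOpen_Ioo hU.hasDerivAt hU.hasDerivAt_deriv hU₂)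
    (hH.contDiffAt (Ioo_mem_nhds neg_one_lt_zero (pow_pos hρ 2)))
    fun r hr => (hUu (hρsub hr)).trans (huH r hr)
  exact ⟨F, isDiscSol_of_polar hε one_lt_two hU hFC hF, fun r hr θ => by rw [hF r hr.1, hUu hr]⟩

theorem stmt16_general (hε1 : ε < 1) (hr0 : r0 ∈ Ioo 0 ε) (h0 : phi22 ε r0 = 0) :
    (∀ (lam : ℝ) (ν : ℕ) (u u' : ℝ → ℝ), IsRadSol ε lam ν (Ioo 0 (1 - r0)) u u' →
      (∃ C : ℝ, ∃ δ > (0 : ℝ), ∀ r ∈ Ioo (0 : ℝ) δ, |u r| ≤ C) →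
      (Tendsto (fun r => pd ε r0 r * u' r) (𝓝[<] (1 - r0)) (𝓝 0) ↔
        ∃ F : ℂ → ℝ, IsDiscSol ε lam F ∧
          ∀ r ∈ Ioo (0 : ℝ) (1 - r0), ∀ θ : ℝ, F (pol r θ) = u r * cos (ν * θ))) ∧
    ∀ F : ℂ → ℝ, ContDiffOn ℝ 1 F (Metric.ball 0 1) →
      TendstoUniformly (fun r θ => pd ε r0 r * Fr F r θ) (fun _ => 0) (𝓝[<] (1 - r0)) := by
  have hR0 : 0 < 1 - r0 := by linarith [hr0.2]
  have huniform : ∀ F : ℂ → ℝ, ContDiffOn ℝ 1 F (Metric.ball 0 1) →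
      TendstoUniformly (fun r θ => pd ε r0 r * Fr F r θ) (fun _ => 0) (𝓝[<] (1 - r0)) :=
    fun F => tendstoUniformly_mul_Fr hR0 (by linarith [hr0.1]) (tendsto_pd hε1 hr0 h0)
  refine ⟨fun lam ν u u' hu ⟨K, δ, hδ, hK⟩ => ⟨exists_isDiscSol hε1 hr0 h0 hu hδ hK, ?_⟩, huniform⟩
  rintro ⟨F, hF, hFu⟩
  have hFr : ∀ r ∈ Ioo 0 (1 - r0), Fr F r 0 = u' r := fun r hr => by
    rw [Fr_eq_of_polar isOpen_Ioo (fun r hr => (hu r hr).1) hFu hr, mul_zero, cos_zero, mul_one]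
  refine ((huniform F ((hF.1.of_le one_le_two).mono Metric.ball_subset_closedBall)).tendsto_at
    0).congr' ?_
  filter_upwards [Ioo_mem_nhdsLT hR0] with r hr
  rw [hFr r hr]

end Main

theorem stmt16 :
    ∃ ε₀ > (0:ℝ), ∀ ε : ℝ, 0 < ε → ε ≤ ε₀ →
      ∀ r0 ∈ Ioo (0:ℝ) ε, phi22 ε r0 = 0 →
      (∀ (lam : ℝ) (ν : ℕ) (u u' : ℝ → ℝ),
        IsRadSol ε lam ν (Ioo 0 (1 - r0)) u u' →
        (∃ C : ℝ, ∃ δ > (0:ℝ), ∀ r ∈ Ioo (0:ℝ) δ, |u r| ≤ C) →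
        (Tendsto (fun r => pd ε r0 r * u' r) (𝓝[<] (1 - r0)) (𝓝 0) ↔
          ∃ F : ℂ → ℝ, IsDiscSol ε lam F ∧
            ∀ r ∈ Ioo (0:ℝ) (1 - r0), ∀ θ : ℝ, F (pol r θ) = u r * Real.cos (ν*θ))) ∧
      (∀ (lam : ℝ) (F : ℂ → ℝ), IsDiscSol ε lam F →
        TendstoUniformly (fun r θ => pd ε r0 r * Fr F r θ) (fun _ => 0)
          (𝓝[<] (1 - r0))) := by
  refine ⟨1 / 2, one_half_pos, fun ε _ hε r0 hr0 h0 => ?_⟩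
  obtain ⟨hradial, huniform⟩ := stmt16_general (by linarith) hr0 h0
  exact ⟨hradial, fun _ F hF =>
    huniform F ((hF.1.of_le one_le_two).mono Metric.ball_subset_closedBall)⟩
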